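/- arXiv:math/0601473 — 2 statements merged into one kernel-verified Lean document; each statement's English description precedes it below -/
import Mathlib

section
/- For every γ > 1 there exist an ergodic σ-invariant Borel probability measure ν_γ on Σ with λ(ν_γ) < 0 and a Borel probability measure μ_γ invariant for (T₀,T₁,ν_γ) such that μ_γ is absolutely continuous with respect to Lebesgue measure and the support of μ_γ is a union of finitely many intervals whose convex hull equals [(γ−1)/b, γ/a]. In particular, if γ ≠ δ with γ, δ > 1, then μ_γ ≠ μ_δ. -/
/-!
Fix `γ > 1` and put `A = (γ - 1) / b`, `B = γ / a`. The inverses of `T₀` and `T₁`, used on `[A, γ)`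
and `[γ, B)` respectively, form a piecewise affine map `G` of `[A, B)` into itself. An invariant
measure `μ` of `G` is an invariant measure for `T₀, T₁`: the natural extension of `(G, μ)` is the
skew product, with symbols recording on which side of `γ` the backward orbit lies
(`exists_natural_extension`). If `μ` is ergodic for `G`, then so is the symbolic marginal `ν` for
the shift, because a symbol can be recovered from the point reached
(`ergodic_shift_of_extension`). So everything reduces to the study of `G`.

Although `G` contracts on `[γ, B)`, it expands the metric with density `1 / y + 1 / B ^ 2`
(`Param.exists_weight_step`), so that the slopes of its iterates grow exponentially. Hence an
iterate shrinks the coefficient sum of a finite combination of Lebesgue measures on intervals by a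
factor `1 / 2`, up to the total mass (`Param.exists_growth`, the counterpart of the Lasota–Yorke
inequality). The images of Lebesgue measure under iterates of `G` therefore have uniformly bounded
densities, and a limit of their averages is an absolutely continuous invariant measure `μ`.

The growth lemma also shows that a set `E` of positive measure with `G E ⊆ E` up to null sets
contains an interval up to a null set: near a density point `E` nearly fills a short interval,
whose images consist mostly of long intervals, so `E` nearly fills long intervals, and compactness
applies. This interval is stretched until it covers `γ`, the only discontinuity. So all such sets
contain a neighbourhood of `γ` (`Param.exists_nhds_γ`), and `μ` is ergodic. Applied to the set
where the density of `μ` does not vanish, this gives a maximal interval around `γ` in that set, and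
the orbits of its two halves up to their return give finitely many intervals that carry `μ`
(`Param.IsACInv.exists_intervals`). They reach `A = G γ` and `B = G (γ-)`.

The Lyapunov exponent is negative because `log (G y) - log y` has integral zero and equals
`-log a` on `[A, γ)` but is strictly less than `-log b` on `[γ, B)`. Finally `γ` can be recovered
from `μ`, since the supremum of the support is `γ / a`.
-/

open MeasureTheory Filter
open scoped ENNReal

/-- The generators `T₀(x) = a·x`, `T₁(x) = b·x + 1`, extended to the one-point
compactification `ℝ̄₊ = [0,∞]` (modelled by `ℝ≥0∞`) by `T₀(∞) = T₁(∞) = ∞`. -/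
noncomputable def Tmap (a b : ℝ) (i : Bool) (x : ℝ≥0∞) : ℝ≥0∞ :=
  if i then ENNReal.ofReal b * x + 1 else ENNReal.ofReal a * x

/-- The one-sided full shift `σ` on `Σ = {0,1}^{ℕ₀}`. -/
def shiftMap (ω : ℕ → Bool) : ℕ → Bool := fun i => ω (i + 1)

/-- The skew product `τ(ω̄, x) = (σ(ω̄), T_{ω̄₀}(x))` on `X = Σ × ℝ̄₊`. -/
noncomputable def skewMap (a b : ℝ) (z : (ℕ → Bool) × ℝ≥0∞) : (ℕ → Bool) × ℝ≥0∞ :=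
  (shiftMap z.1, Tmap a b (z.1 0) z.2)

/-- A Borel probability measure `μ` on `ℝ̄₊` with `μ({∞}) = 0` is *invariant for*
`(T₀, T₁, ν)` if there is a `τ`-invariant Borel probability measure `κ` on `Σ × ℝ̄₊`
whose marginal on `Σ` is `ν` and whose marginal on `ℝ̄₊` is `μ`. -/
def IsInvariantFor (a b : ℝ) (ν : Measure (ℕ → Bool)) (μ : Measure ℝ≥0∞) : Prop :=
  IsProbabilityMeasure μ ∧ μ {⊤} = 0 ∧
    ∃ κ : Measure ((ℕ → Bool) × ℝ≥0∞), IsProbabilityMeasure κ ∧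
      MeasurePreserving (skewMap a b) κ κ ∧
      κ.map Prod.fst = ν ∧ κ.map Prod.snd = μ

/-- The Lyapunov exponent `λ(ν) = ν(C₀)·ln a + ν(C₁)·ln b` of a shift-invariant
measure `ν` on `Σ`, where `Cᵢ = {ω̄ : ω̄₀ = i}`. -/
noncomputable def lyap (a b : ℝ) (ν : Measure (ℕ → Bool)) : ℝ :=
  (ν {ω | ω 0 = false}).toReal * Real.log a + (ν {ω | ω 0 = true}).toReal * Real.log b

/-! ### The natural extension -/

open unitInterval ProbabilityTheory in
/-- Splitting off the first coordinate of an i.i.d. sequence of uniform variables leaves an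
independent i.i.d. sequence with the same law. -/
lemma measurePreserving_shift_infinitePi :
    MeasurePreserving (fun u : ℕ → I => (u 0, fun n => u (n + 1)))
      (Measure.infinitePi fun _ => volume)
      ((volume : Measure I).prod (Measure.infinitePi fun _ => volume)) := by
  refine ⟨by fun_prop, ?_⟩
  let e : I × (ℕ → I) → (ℕ → I) := fun p n => Nat.casesOn n p.1 p.2
  have he : Measurable e := by
    refine measurable_pi_lambda _ fun n => ?_
    cases n with
    | zero => exact measurable_fst
    | succ n => exact (measurable_pi_apply n).comp measurable_snd
  have key : ((volume : Measure I).prod (Measure.infinitePi fun _ : ℕ => (volume : Measure I))).map e =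
      Measure.infinitePi fun _ => volume := by
    refine Measure.eq_infinitePi _ fun s t ht => ?_
    rw [Measure.map_apply he (MeasurableSet.pi s.countable_toSet fun i _ => ht i)]
    classical
    let s' : Finset ℕ := s.preimage Nat.succ (Nat.succ_injective.injOn)
    have hpre : e ⁻¹' (Set.pi (s : Set ℕ) t) =
        (if 0 ∈ s then t 0 else Set.univ) ×ˢ (Set.pi (s' : Set ℕ) fun n => t (n + 1)) := by
      ext ⟨x, u⟩
      simp only [Set.mem_preimage, Set.mem_pi, Set.mem_prod, Finset.mem_coe, s',
        Finset.mem_preimage]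
      constructor
      · intro h
        refine ⟨?_, fun n hn => h (n + 1) hn⟩
        split_ifs with h0
        · exact h 0 h0
        · trivial
      · rintro ⟨h0, h1⟩ n hn
        cases n with
        | zero => rw [if_pos hn] at h0; exact h0
        | succ n => exact h1 n hn
    rw [hpre, Measure.prod_prod, Measure.infinitePi_pi _ (fun i _ => ht _)]
    by_cases h0 : 0 ∈ s
    · have hs : s = insert 0 (s'.map ⟨Nat.succ, Nat.succ_injective⟩) := by
        ext n
        cases n with
        | zero => simp [h0]
        | succ n => simp [s']
      rw [if_pos h0]
      conv_rhs => rw [hs]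
      rw [Finset.prod_insert (by simp), Finset.prod_map]
      rfl
    · have hs : s = s'.map ⟨Nat.succ, Nat.succ_injective⟩ := by
        ext n
        cases n with
        | zero => simp [h0]
        | succ n => simp [s']
      rw [if_neg h0, measure_univ, one_mul]
      conv_rhs => rw [hs]
      rw [Finset.prod_map]
      rfl
  conv_lhs => rw [← key]
  rw [Measure.map_map (by fun_prop) he]
  exact Measure.map_id

/-- The skew product of a pair of real maps over the full shift, the analogue of `skewMap` on
`Σ × ℝ`. -/
def skewReal (T : Bool → ℝ → ℝ) (z : (ℕ → Bool) × ℝ) : (ℕ → Bool) × ℝ :=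
  (shiftMap z.1, T (z.1 0) z.2)

lemma measurable_shiftMap : Measurable shiftMap :=
  measurable_pi_lambda _ fun n => measurable_pi_apply (n + 1)

lemma measurable_skewReal {T : Bool → ℝ → ℝ} (hT : ∀ i, Measurable (T i)) :
    Measurable (skewReal T) := by
  refine (measurable_shiftMap.comp measurable_fst).prodMk ?_
  have : Measurable fun p : ℝ × Bool => T p.2 p.1 :=
    measurable_from_prod_countable_left fun i => hT i
  exact this.comp (measurable_snd.prodMk ((measurable_pi_apply 0).comp measurable_fst))

open unitInterval ProbabilityTheory in
/-- Let `G` preserve `μ` and let `T i` be the inverse branch of `G` on `{c = i}`. Running `G`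
backwards means choosing, at a point `x`, a letter `i` with the conditional law of `c y` given
`G y = x` and moving to `T i x`. The joint law `κ` of the chosen letters and of the starting point
is invariant under the skew product; its second marginal is `μ`, and the joint law of the starting
point and the first letter is that of `(G y, c y)`.

The random choices are realised as a function `f` of the current point and of an i.i.d. sequence
of uniform variables. -/
lemma exists_natural_extension (μ : Measure ℝ) [IsProbabilityMeasure μ] {G : ℝ → ℝ}
    (hG : MeasurePreserving G μ μ) {c : ℝ → Bool} (hc : Measurable c) {T : Bool → ℝ → ℝ}
    (hT : ∀ i, Measurable (T i)) (h : ∀ᵐ y ∂μ, T (c y) (G y) = y) :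
    ∃ κ : Measure ((ℕ → Bool) × ℝ), IsProbabilityMeasure κ ∧
      MeasurePreserving (skewReal T) κ κ ∧ κ.map Prod.snd = μ ∧
      κ.map (fun z => (z.2, z.1 0)) = μ.map (fun y => (G y, c y)) := by
  set π : Measure (ℝ × Bool) := μ.map fun y => (G y, c y) with hπ
  have hGc : Measurable fun y => (G y, c y) := hG.measurable.prodMk hc
  have : IsProbabilityMeasure π := Measure.isProbabilityMeasure_map hGc.aemeasurable
  have hfst : π.fst = μ := by
    rw [Measure.fst, hπ, Measure.map_map measurable_fst hGc]; exact hG.map_eq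
  obtain ⟨f, hf, hfκ⟩ := π.condKernel.exists_measurable_map_eq_unitInterval
  have hdis : μ ⊗ₘ π.condKernel = π := by
    conv_rhs => rw [← π.disintegrate π.condKernel, hfst]
  have hf1 : Measurable fun p : ℝ × I => (p.1, f p.1 p.2) := measurable_fst.prodMk hf
  have hlaw : (μ.prod (volume : Measure I)).map (fun p => (p.1, f p.1 p.2)) = π := by
    rw [← hdis]
    ext s hs
    rw [Measure.map_apply hf1 hs, Measure.prod_apply (hf1 hs), Measure.compProd_apply hs]
    refine lintegral_congr fun x => ?_
    have hfx : Measurable (f x) := hf.comp measurable_prodMk_left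
    rw [← hfκ x, Measure.map_apply hfx (measurable_prodMk_left hs)]
    rfl
  have hT' : Measurable fun p : ℝ × Bool => T p.2 p.1 :=
    measurable_from_prod_countable_left fun i => hT i
  have hS : MeasurePreserving (fun p : ℝ × I => T (f p.1 p.2) p.1) (μ.prod volume) μ := by
    refine ⟨hT'.comp hf1, ?_⟩
    have : (fun p : ℝ × I => T (f p.1 p.2) p.1) =
      (fun p : ℝ × Bool => T p.2 p.1) ∘ fun p : ℝ × I => (p.1, f p.1 p.2) := rfl
    rw [this, ← Measure.map_map hT' hf1, hlaw, hπ, Measure.map_map hT' hGc]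
    conv_rhs => rw [← Measure.map_id (μ := μ)]
    exact Measure.map_congr h
  set Λ : Measure (ℕ → I) := Measure.infinitePi fun _ => volume with hΛ
  let R : ℝ × (ℕ → I) → ℝ × (ℕ → I) := fun z => (T (f z.1 (z.2 0)) z.1, fun n => z.2 (n + 1))
  have hR : MeasurePreserving R (μ.prod Λ) (μ.prod Λ) := by
    have h1 := (MeasurePreserving.id μ).prod measurePreserving_shift_infinitePi
    have h2 := (measurePreserving_prodAssoc μ (volume : Measure I) Λ).symm
    have h3 := hS.prod (MeasurePreserving.id Λ)
    exact h3.comp (h2.comp h1)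
  have hcode : Measurable fun z : ℝ × (ℕ → I) => f z.1 (z.2 0) :=
    hf.comp (measurable_fst.prodMk ((measurable_pi_apply 0).comp measurable_snd))
  let Φ : ℝ × (ℕ → I) → (ℕ → Bool) × ℝ := fun z => (fun n => f (R^[n] z).1 ((R^[n] z).2 0), z.1)
  have hΦ : Measurable Φ := by
    refine (measurable_pi_lambda _ fun n => ?_).prodMk measurable_fst
    exact hcode.comp (hR.measurable.iterate n)
  have hsemi : skewReal T ∘ Φ = Φ ∘ R := rfl
  refine ⟨(μ.prod Λ).map Φ, Measure.isProbabilityMeasure_map hΦ.aemeasurable,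
    ⟨measurable_skewReal hT, ?_⟩, ?_, ?_⟩
  · rw [Measure.map_map (measurable_skewReal hT) hΦ, hsemi, ← Measure.map_map hΦ hR.measurable,
      hR.map_eq]
  · rw [Measure.map_map measurable_snd hΦ]
    exact Measure.map_fst_prod.trans (by simp)
  · rw [Measure.map_map (by fun_prop) hΦ, ← hlaw]
    have h0 : MeasurePreserving (fun u : ℕ → I => u 0) Λ volume :=
      measurePreserving_eval_infinitePi (fun _ => (volume : Measure I)) 0
    rw [← ((MeasurePreserving.id μ).prod h0).map_eq, Measure.map_map hf1
      ((MeasurePreserving.id μ).prod h0).measurable]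
    rfl

/-! ### Ergodicity of the symbolic factor -/

open scoped symmDiff in
/-- If the point `T (ω 0) x` determines both `x` and `ω 0`, then up to a small error membership of
`ω` in a shift-invariant set is decided by the second coordinate `x` alone: the invariant set is
close to a cylinder over finitely many letters, and after enough steps those letters can all be
read off the point that has been reached. -/
lemma exists_snd_approx {κ : Measure ((ℕ → Bool) × ℝ)} [IsProbabilityMeasure κ]
    {G : ℝ → ℝ} (hG : Measurable G) {c : ℝ → Bool} (hc : Measurable c) {T : Bool → ℝ → ℝ}
    (hκ : MeasurePreserving (skewReal T) κ κ)
    (h : ∀ᵐ z ∂κ, G (T (z.1 0) z.2) = z.2 ∧ c (T (z.1 0) z.2) = z.1 0)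
    {E : Set (ℕ → Bool)} (hE : MeasurableSet E) (hEs : shiftMap ⁻¹' E = E) {ε : ℝ≥0∞}
    (hε : 0 < ε) :
    ∃ D : Set ℝ, MeasurableSet D ∧ κ {z | ¬ (z.1 ∈ E ↔ z.2 ∈ D)} < ε := by
  have : IsProbabilityMeasure (κ.map Prod.fst) :=
    Measure.isProbabilityMeasure_map measurable_fst.aemeasurable
  obtain ⟨C, hC, hCε⟩ := exists_measure_symmDiff_lt_of_generateFrom_isSetRing
    (μ := κ.map Prod.fst) (isSetRing_measurableCylinders (α := fun _ : ℕ => Bool))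
    ⟨{Set.univ}, by simp, by
      rw [Set.singleton_subset_iff, mem_measurableCylinders]
      exact ⟨∅, Set.univ, MeasurableSet.univ, by simp⟩, by simp⟩
    generateFrom_measurableCylinders.symm hE hε
  obtain ⟨s, S, hS, rfl⟩ := (mem_measurableCylinders _).1 hC
  have hCm : MeasurableSet (cylinder (α := fun _ : ℕ => Bool) s S) :=
    .of_mem_measurableCylinders hC
  set Cy : Set (ℕ → Bool) := cylinder (α := fun _ : ℕ => Bool) s S with hCy
  obtain ⟨n, hn⟩ := s.bddAbove
  -- the point reached at time `N` determines the first `N` letters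
  set N := n + 1 with hN
  let w : ℝ → ℕ → Bool := fun y k => c (G^[N - (k + 1)] y)
  have hw : Measurable w := measurable_pi_lambda _ fun k => hc.comp (hG.iterate _)
  refine ⟨w ⁻¹' Cy, hw hCm, ?_⟩
  have hall : ∀ᵐ z ∂κ, ∀ k, G ((skewReal T)^[k + 1] z).2 = ((skewReal T)^[k] z).2 ∧
      c ((skewReal T)^[k + 1] z).2 = ((skewReal T)^[k] z).1 0 := by
    rw [ae_all_iff]
    intro k
    have := (hκ.iterate k).quasiMeasurePreserving.ae h
    filter_upwards [this] with z hz
    rw [Function.iterate_succ_apply']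
    exact hz
  have hfst : ∀ k (z : (ℕ → Bool) × ℝ), ((skewReal T)^[k] z).1 = shiftMap^[k] z.1 := by
    intro k
    induction k with
    | zero => intro z; rfl
    | succ k ih => intro z; rw [Function.iterate_succ_apply, Function.iterate_succ_apply, ih]; rfl
  have hsh : ∀ k (ω : ℕ → Bool) m, shiftMap^[k] ω m = ω (k + m) := by
    intro k
    induction k with
    | zero => intro ω m; simp
    | succ k ih =>
      intro ω m
      rw [Function.iterate_succ_apply, ih]
      simp only [shiftMap]
      congr 1; omega
  have hEk : ∀ k (ω : ℕ → Bool), shiftMap^[k] ω ∈ E ↔ ω ∈ E := by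
    intro k
    induction k with
    | zero => intro ω; rfl
    | succ k ih =>
      intro ω
      rw [Function.iterate_succ_apply, ih]
      conv_rhs => rw [← hEs]
      rfl
  have hback : ∀ᵐ z ∂κ, (((skewReal T)^[N] z).2 ∈ w ⁻¹' Cy ↔ z.1 ∈ Cy) := by
    filter_upwards [hall] with z hz
    have hit : ∀ j k, G^[j] ((skewReal T)^[k + j] z).2 = ((skewReal T)^[k] z).2 := by
      intro j
      induction j with
      | zero => intro k; rfl
      | succ j ih =>
        intro k
        rw [Function.iterate_succ_apply, show k + (j + 1) = k + j + 1 by omega, (hz _).1, ih]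
    have : ∀ k ∈ s, w ((skewReal T)^[N] z).2 k = z.1 k := by
      intro k hk
      have hkn : k ≤ n := hn hk
      simp only [w]
      have h1 := hit (N - (k + 1)) (k + 1)
      rw [show k + 1 + (N - (k + 1)) = N by omega] at h1
      rw [h1, (hz k).2, hfst, hsh]; rfl
    rw [Set.mem_preimage, hCy, mem_cylinder, mem_cylinder]
    have h2 : s.restrict (w ((skewReal T)^[N] z).2) = s.restrict z.1 := by
      ext k; exact this k k.2
    rw [h2]
  have hsn : MeasurableSet {z : (ℕ → Bool) × ℝ | ¬ (z.1 ∈ E ↔ z.2 ∈ w ⁻¹' Cy)} := by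
    have h1 : MeasurableSet {z : (ℕ → Bool) × ℝ | z.1 ∈ E} := measurable_fst hE
    have h2 : MeasurableSet {z : (ℕ → Bool) × ℝ | z.2 ∈ w ⁻¹' Cy} :=
      measurable_snd (hw hCm)
    exact (h1.iff h2).compl
  rw [← (hκ.iterate N).measure_preimage hsn.nullMeasurableSet]
  rw [Measure.map_apply measurable_fst (hCm.symmDiff hE)] at hCε
  refine lt_of_le_of_lt (measure_mono_ae ?_) hCε
  filter_upwards [hback] with z hz
  intro hzz
  change ¬ (((skewReal T)^[N] z).1 ∈ E ↔ ((skewReal T)^[N] z).2 ∈ w ⁻¹' Cy) at hzz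
  rw [hz, hfst, hEk] at hzz
  change z.1 ∈ Cy ∆ E
  rw [Set.mem_symmDiff]
  tauto

/-- Ergodicity passes from the backward map `G` to the symbolic factor of its natural extension:
a shift-invariant set coincides, modulo `κ`, with a set depending only on the second coordinate,
and the latter is almost invariant under `G`. -/
lemma ergodic_shift_of_extension {κ : Measure ((ℕ → Bool) × ℝ)} [IsProbabilityMeasure κ]
    {G : ℝ → ℝ} {c : ℝ → Bool} (hc : Measurable c) {T : Bool → ℝ → ℝ}
    (hκ : MeasurePreserving (skewReal T) κ κ)
    (h : ∀ᵐ z ∂κ, G (T (z.1 0) z.2) = z.2 ∧ c (T (z.1 0) z.2) = z.1 0)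
    (hG : Ergodic G (κ.map Prod.snd)) :
    Ergodic shiftMap (κ.map Prod.fst) := by
  have hmp : MeasurePreserving shiftMap (κ.map Prod.fst) (κ.map Prod.fst) := by
    refine ⟨measurable_shiftMap, ?_⟩
    rw [Measure.map_map measurable_shiftMap measurable_fst]
    have : shiftMap ∘ Prod.fst = Prod.fst ∘ skewReal T := rfl
    rw [this, ← Measure.map_map measurable_fst hκ.measurable, hκ.map_eq]
  refine ⟨hmp, ⟨fun E hE hEs => ?_⟩⟩
  -- approximate `E` by second-coordinate sets with summable errors, and take their limsup
  have happ : ∀ k : ℕ, ∃ D : Set ℝ, MeasurableSet D ∧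
      κ {z | ¬ (z.1 ∈ E ↔ z.2 ∈ D)} < (2⁻¹ : ℝ≥0∞) ^ k := fun k =>
    exists_snd_approx hG.measurable hc hκ h hE hEs (ENNReal.pow_pos (by simp) k)
  choose D hD hDε using happ
  have hbc : ∀ᵐ z ∂κ, ∀ᶠ k in atTop, z ∉ {z : (ℕ → Bool) × ℝ | ¬ (z.1 ∈ E ↔ z.2 ∈ D k)} := by
    refine ae_eventually_notMem (ne_top_of_le_ne_top ?_ (ENNReal.tsum_le_tsum fun k => (hDε k).le))
    rw [ENNReal.tsum_geometric]
    simp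
  let F : Set ℝ := {y | ∀ᶠ k in atTop, y ∈ D k}
  have hF : MeasurableSet F := by
    have : F = ⋃ n, ⋂ k ≥ n, D k := by
      ext y; simp [F, eventually_atTop]
    rw [this]
    exact .iUnion fun n => .iInter fun k => .iInter fun _ => hD k
  have hEF : ∀ᵐ z ∂κ, (z.1 ∈ E ↔ z.2 ∈ F) := by
    filter_upwards [hbc] with z hz
    simp only [not_not] at hz
    constructor
    · intro hzE
      exact hz.mono fun k hk => hk.1 hzE
    · intro hzF
      obtain ⟨k, hk1, hk2⟩ := (hz.and hzF).exists
      exact hk1.2 hk2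
  have hEF' := hκ.quasiMeasurePreserving.ae hEF
  have hFinv : G ⁻¹' F =ᵐ[κ.map Prod.snd] F := by
    have hinv : ∀ᵐ z ∂κ, (G (skewReal T z).2 ∈ F ↔ (skewReal T z).2 ∈ F) := by
      filter_upwards [h, hEF, hEF'] with z h1 h2 h3
      have h4 : (skewReal T z).1 ∈ E ↔ z.1 ∈ E := by
        conv_rhs => rw [← hEs]
        rfl
      have h5 : G (skewReal T z).2 = z.2 := h1.1
      rw [h5, ← h2, ← h4, h3]
    have hm : MeasurableSet {y | G y ∈ F ↔ y ∈ F} := (hG.measurable hF).iff hF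
    have h6 : ∀ᵐ y ∂(κ.map Prod.snd), (G y ∈ F ↔ y ∈ F) := by
      rw [ae_map_iff measurable_snd.aemeasurable hm]
      have h7 : ∀ᵐ z ∂(κ.map (skewReal T)), (G z.2 ∈ F ↔ z.2 ∈ F) := by
        have hm' : MeasurableSet {z : (ℕ → Bool) × ℝ | G z.2 ∈ F ↔ z.2 ∈ F} := measurable_snd hm
        rw [ae_map_iff hκ.aemeasurable hm']
        exact hinv
      rwa [hκ.map_eq] at h7
    exact eventuallyEq_set.2 h6
  rw [eventuallyConst_set']
  have hfstE : ∀ᵐ z ∂κ, (z.1 ∈ E ↔ z.2 ∈ F) := hEF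
  rcases hG.quasiErgodic.ae_empty_or_univ₀ hF.nullMeasurableSet hFinv with h0 | h1
  · left
    have := ae_of_ae_map measurable_snd.aemeasurable (eventuallyEq_set.1 h0)
    refine eventuallyEq_set.2 ?_
    have hm : MeasurableSet {ω | ω ∈ E ↔ ω ∈ (∅ : Set (ℕ → Bool))} := hE.iff .empty
    rw [ae_map_iff measurable_fst.aemeasurable hm]
    filter_upwards [this, hEF] with z h2 h3
    rw [h3, h2]; simp
  · right
    have := ae_of_ae_map measurable_snd.aemeasurable (eventuallyEq_set.1 h1)
    refine eventuallyEq_set.2 ?_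
    have hm : MeasurableSet {ω | ω ∈ E ↔ ω ∈ (Set.univ : Set (ℕ → Bool))} := hE.iff .univ
    rw [ae_map_iff measurable_fst.aemeasurable hm]
    filter_upwards [this, hEF] with z h2 h3
    rw [h3, h2]; simp

/-! ### The backward map -/

/-- The parameters `a, b, γ` of the construction, with the constraints imposed on them. -/
structure Param where
  a : ℝ
  b : ℝ
  γ : ℝ
  ha : 0 < a
  ha1 : a < 1
  hb : 1 < b
  hγ : 1 < γ

namespace Param

/-- The left end `(γ - 1) / b` of the interval carrying the dynamics. -/
noncomputable def A (P : Param) : ℝ := (P.γ - 1) / P.b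

/-- The right end `γ / a` of the interval carrying the dynamics. -/
noncomputable def B (P : Param) : ℝ := P.γ / P.a

/-- The backward map: it applies `T₀⁻¹` on the left of `γ` and `T₁⁻¹` from `γ` on. -/
noncomputable def G (P : Param) (y : ℝ) : ℝ := if y < P.γ then y / P.a else (y - 1) / P.b

/-- The slope of `G` immediately to the right of `y`. -/
noncomputable def sl (P : Param) (y : ℝ) : ℝ := if y < P.γ then 1 / P.a else 1 / P.b

/-- `D n y` is the slope of `G^[n]` immediately to the right of `y`. -/
noncomputable def D (P : Param) : ℕ → ℝ → ℝ
  | 0, _ => 1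
  | n + 1, y => P.sl (P.G^[n] y) * P.D n y

open Classical in
/-- A finite set containing all points at which one of the first `n` iterates hits `γ`, that is,
all possible discontinuities of `G^[n]`. -/
noncomputable def cuts (P : Param) : ℕ → Finset ℝ
  | 0 => ∅
  | n + 1 => insert P.γ ((cuts P n).image (fun y => P.a * y) ∪ (cuts P n).image fun y => P.b * y + 1)

variable (P : Param)

lemma hb0 : 0 < P.b := by linarith [P.hb]

lemma A_pos : 0 < P.A := div_pos (by linarith [P.hγ]) P.hb0

lemma A_lt_γ : P.A < P.γ := by
  rw [A, div_lt_iff₀ P.hb0]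
  nlinarith [P.hγ, P.hb]

lemma γ_lt_B : P.γ < P.B := by
  rw [B, lt_div_iff₀ P.ha]
  nlinarith [P.hγ, P.ha1]

lemma one_lt_B : 1 < P.B := P.hγ.trans P.γ_lt_B

lemma measurable_G : Measurable P.G :=
  Measurable.ite measurableSet_Iio (by fun_prop) (by fun_prop)

lemma sl_pos (y : ℝ) : 0 < P.sl y := by
  have := P.ha; have := P.hb0
  unfold sl; split_ifs <;> positivity

lemma D_pos (n : ℕ) (y : ℝ) : 0 < P.D n y := by
  induction n with
  | zero => exact one_pos
  | succ n ih => exact mul_pos (P.sl_pos _) ih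

lemma D_succ' (n : ℕ) (y : ℝ) : P.D (n + 1) y = P.D n (P.G y) * P.sl y := by
  induction n with
  | zero => simp [D]
  | succ n ih => rw [D, ih, D, ← Function.iterate_succ_apply, mul_assoc]

lemma G_mem {y : ℝ} (hy : y ∈ Set.Ico P.A P.B) : P.G y ∈ Set.Ico P.A P.B := by
  have ha := P.ha; have hb := P.hb0
  obtain ⟨h1, h2⟩ := hy
  unfold G
  split_ifs with h
  · refine ⟨?_, ?_⟩
    · rw [le_div_iff₀ ha]
      nlinarith [P.ha1, P.A_pos]
    · rw [B]; gcongr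
  · push Not at h
    refine ⟨?_, ?_⟩
    · rw [A]; gcongr
    · rw [div_lt_iff₀ hb]
      nlinarith [P.hb, P.one_lt_B]

lemma iterate_G_mem {y : ℝ} (hy : y ∈ Set.Ico P.A P.B) (n : ℕ) :
    P.G^[n] y ∈ Set.Ico P.A P.B := by
  induction n with
  | zero => exact hy
  | succ n ih => rw [Function.iterate_succ_apply']; exact P.G_mem ih

/-- A density for a metric on `[A, B)` in which `G` is uniformly expanding, although its slope
`1 / b` on the right branch is less than `1`. The term `1 / y` makes the metric nearly
scale-invariant, so that the left branch becomes an isometry and the right branch, because of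
the translation, an expansion; the constant term makes the left branch expand and is small enough
not to spoil the right one. -/
noncomputable def weight (y : ℝ) : ℝ := 1 / y + 1 / P.B ^ 2

/-- `G` expands the metric of density `weight` by a factor bounded away from `1`. -/
lemma exists_weight_step : ∃ r : ℝ, 1 < r ∧ ∀ y ∈ Set.Ico P.A P.B,
    r * P.weight y ≤ P.sl y * P.weight (P.G y) := by
  have ha := P.ha; have hb := P.hb0; have hA := P.A_pos
  have hB : 0 < P.B := by linarith [P.one_lt_B]
  -- `d` is the least gain `sl y * weight (G y) - weight y` of the two branches; dividing by the
  -- largest weight `W` turns the additive gain into a factor.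
  set d : ℝ := min ((1 / P.B ^ 2) * (1 / P.a - 1)) (1 / (P.b * P.B ^ 2)) with hd
  have hd0 : 0 < d := by
    refine lt_min (mul_pos (by positivity) ?_) (by positivity)
    rw [sub_pos, lt_div_iff₀ ha]; linarith [P.ha1]
  set W : ℝ := 1 / P.A + 1 / P.B ^ 2 with hW
  have hW0 : 0 < W := by positivity
  refine ⟨1 + d / W, by linarith [div_pos hd0 hW0], fun y hy => ?_⟩
  have hy0 : 0 < y := hA.trans_le hy.1
  have hwW : P.weight y ≤ W := by
    unfold weight
    have := one_div_le_one_div_of_le hA hy.1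
    linarith
  have h1 : (1 + d / W) * P.weight y ≤ P.weight y + d := by
    have : d / W * P.weight y ≤ d := by
      rw [div_mul_eq_mul_div, div_le_iff₀ hW0]
      exact mul_le_mul_of_nonneg_left hwW hd0.le
    linarith
  refine h1.trans ?_
  unfold weight sl G
  split_ifs with h
  · have : 1 / P.a * (1 / (y / P.a) + 1 / P.B ^ 2) =
        1 / y + 1 / P.B ^ 2 + (1 / P.B ^ 2) * (1 / P.a - 1) := by
      field_simp; ring
    rw [this]
    linarith [min_le_left ((1 / P.B ^ 2) * (1 / P.a - 1)) (1 / (P.b * P.B ^ 2))]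
  · push Not at h
    have hy1 : 0 < y - 1 := by linarith [P.hγ]
    have : 1 / P.b * (1 / ((y - 1) / P.b) + 1 / P.B ^ 2) =
        1 / y + 1 / P.B ^ 2 + 1 / (P.b * P.B ^ 2) + (1 / (y * (y - 1)) - 1 / P.B ^ 2) := by
      field_simp; ring
    rw [this]
    have h2 : 1 / P.B ^ 2 ≤ 1 / (y * (y - 1)) := by
      apply one_div_le_one_div_of_le (by positivity)
      nlinarith [hy.2]
    linarith [min_le_right ((1 / P.B ^ 2) * (1 / P.a - 1)) (1 / (P.b * P.B ^ 2))]

/-- Exponential growth of the slopes of `G^[n]`, uniformly on `[A, B)`. -/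
lemma exists_D_lower : ∃ c r : ℝ, 0 < c ∧ 1 < r ∧ ∀ n, ∀ y ∈ Set.Ico P.A P.B,
    c * r ^ n ≤ P.D n y := by
  have hA := P.A_pos
  have hB : 0 < P.B := by linarith [P.one_lt_B]
  obtain ⟨r, hr, hstep⟩ := P.exists_weight_step
  set W : ℝ := 1 / P.A + 1 / P.B ^ 2 with hW
  set w : ℝ := 1 / P.B ^ 2 with hw
  have hW0 : 0 < W := by positivity
  have hw0 : 0 < w := by positivity
  refine ⟨w / W, r, div_pos hw0 hW0, hr, fun n y hy => ?_⟩
  have hind : r ^ n * P.weight y ≤ P.D n y * P.weight (P.G^[n] y) := by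
    induction n with
    | zero => simp [D]
    | succ n ih =>
      have h1 := hstep _ (P.iterate_G_mem hy n)
      rw [Function.iterate_succ_apply', D]
      have h2 := mul_le_mul_of_nonneg_left h1 (P.D_pos n y).le
      have h3 := mul_le_mul_of_nonneg_left ih (by linarith : (0 : ℝ) ≤ r)
      calc r ^ (n + 1) * P.weight y = r * (r ^ n * P.weight y) := by ring
        _ ≤ r * (P.D n y * P.weight (P.G^[n] y)) := h3
        _ = P.D n y * (r * P.weight (P.G^[n] y)) := by ring
        _ ≤ _ := h2
        _ = _ := by ring
  have hyn := P.iterate_G_mem hy n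
  have h1 : P.weight (P.G^[n] y) ≤ W := by
    unfold weight
    have := one_div_le_one_div_of_le hA hyn.1
    linarith
  have h2 : w ≤ P.weight y := by
    unfold weight
    have : 0 < 1 / y := by have := hA.trans_le hy.1; positivity
    linarith
  rw [div_mul_eq_mul_div, div_le_iff₀ hW0]
  have hrn : 0 < r ^ n := by positivity
  nlinarith [mul_le_mul_of_nonneg_left h1 (P.D_pos n y).le,
    mul_le_mul_of_nonneg_left h2 hrn.le]

lemma G_affine {p q y : ℝ} (hcut : P.γ ∉ Set.Ioo p q) (hy : y ∈ Set.Ico p q) :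
    P.G y = P.G p + P.sl p * (y - p) := by
  unfold G sl
  obtain ⟨h1, h2⟩ := hy
  by_cases hp : p < P.γ
  · have : y < P.γ := by
      by_contra h
      exact hcut ⟨hp, by linarith⟩
    rw [if_pos hp, if_pos this, if_pos hp]; ring
  · have : ¬ y < P.γ := by linarith
    rw [if_neg hp, if_neg this, if_neg hp]; ring

lemma G_end_le {p q : ℝ} (hcut : P.γ ∉ Set.Ioo p q) (hq : q ≤ P.B) :
    P.G p + P.sl p * (q - p) ≤ P.B := by
  have ha := P.ha; have hb := P.hb0
  unfold G sl
  by_cases hp : p < P.γ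
  · have hq' : q ≤ P.γ := by
      by_contra h
      exact hcut ⟨hp, by linarith⟩
    rw [if_pos hp, if_pos hp]
    have : p / P.a + 1 / P.a * (q - p) = q / P.a := by ring
    rw [this, B]; gcongr
  · rw [if_neg hp, if_neg hp]
    have : (p - 1) / P.b + 1 / P.b * (q - p) = (q - 1) / P.b := by ring
    rw [this, div_le_iff₀ hb]
    nlinarith [P.hb, P.one_lt_B]

lemma map_affine (p q u s : ℝ) (hs : 0 < s) :
    ((volume : Measure ℝ).restrict (Set.Ico p q)).map (fun y => u + s * (y - p)) =
      ENNReal.ofReal s⁻¹ • (volume : Measure ℝ).restrict (Set.Ico u (u + s * (q - p))) := by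
  have hm : Measurable fun y : ℝ => u + s * (y - p) := by fun_prop
  have hpre : Set.Ico p q = (fun y : ℝ => u + s * (y - p)) ⁻¹' Set.Ico u (u + s * (q - p)) := by
    ext y
    simp only [Set.mem_preimage, Set.mem_Ico]
    constructor
    · rintro ⟨h1, h2⟩
      exact ⟨by nlinarith, by nlinarith⟩
    · rintro ⟨h1, h2⟩
      refine ⟨by nlinarith, ?_⟩
      by_contra h
      nlinarith
  have hvol : (volume : Measure ℝ).map (fun y => u + s * (y - p)) =
      ENNReal.ofReal s⁻¹ • (volume : Measure ℝ) := by
    have : (fun y : ℝ => u + s * (y - p)) = (fun y => (u - s * p) + y) ∘ (fun y => s * y) := by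
      ext y; simp; ring
    rw [this, ← Measure.map_map (by fun_prop) (by fun_prop), Real.map_volume_mul_left hs.ne',
      Measure.map_smul, (measurePreserving_add_left volume _).map_eq, abs_of_pos (inv_pos.2 hs)]
  rw [hpre, ← Measure.restrict_map hm measurableSet_Ico, hvol, Measure.restrict_smul]

/-- The first `n` iterates of `[p, q)` never contain `γ` in their interior, so that `G^[n]` is
affine on `[p, q)`. The end `q` is treated as a left limit, hence the formula for the right end of
the `k`-th image. -/
def Uncut (n : ℕ) (p q : ℝ) : Prop :=
  ∀ k < n, P.γ ∉ Set.Ioo (P.G^[k] p) (P.G^[k] p + P.D k p * (q - p))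

variable {P}

lemma Uncut.mono {m n : ℕ} {p q : ℝ} (h : P.Uncut n p q) (hmn : m ≤ n) : P.Uncut m p q :=
  fun k hk => h k (hk.trans_le hmn)

lemma Uncut.end_le {n : ℕ} {p q : ℝ} (h : P.Uncut n p q) (hq : q ≤ P.B) :
    P.G^[n] p + P.D n p * (q - p) ≤ P.B := by
  induction n with
  | zero => simpa [D] using hq
  | succ n ih =>
    have h1 := ih (h.mono n.le_succ)
    have h2 := P.G_end_le (h n n.lt_succ_self) h1
    rw [Function.iterate_succ_apply', D]
    calc _ = P.G (P.G^[n] p) + P.sl (P.G^[n] p) * (P.G^[n] p + P.D n p * (q - p) - P.G^[n] p) := by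
          ring
      _ ≤ _ := h2

lemma Uncut.affine {n : ℕ} {p q y : ℝ} (h : P.Uncut n p q) (hy : y ∈ Set.Ico p q) :
    P.G^[n] y = P.G^[n] p + P.D n p * (y - p) := by
  induction n with
  | zero => simp [D]
  | succ n ih =>
    have h1 := ih (h.mono n.le_succ)
    have hD := P.D_pos n p
    have h2 := P.G_affine (y := P.G^[n] y) (h n n.lt_succ_self)
      ⟨by rw [h1]; nlinarith [hy.1], by rw [h1]; nlinarith [hy.2]⟩
    rw [Function.iterate_succ_apply', Function.iterate_succ_apply', h2, h1, D]
    ring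

lemma Uncut.map {n : ℕ} {p q : ℝ} (h : P.Uncut n p q) :
    ((volume : Measure ℝ).restrict (Set.Ico p q)).map P.G^[n] =
      ENNReal.ofReal (P.D n p)⁻¹ • (volume : Measure ℝ).restrict
        (Set.Ico (P.G^[n] p) (P.G^[n] p + P.D n p * (q - p))) := by
  rw [← map_affine p q _ _ (P.D_pos n p)]
  refine Measure.map_congr ?_
  filter_upwards [ae_restrict_mem measurableSet_Ico] with y hy
  exact h.affine hy

variable (P)

lemma uncut_of_cuts {n : ℕ} {p q : ℝ} (hpq : p < q) (h : ∀ s ∈ P.cuts n, s ∉ Set.Ioo p q) :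
    P.Uncut n p q := by
  have ha := P.ha; have hb := P.hb0
  induction n generalizing p q with
  | zero => intro k hk; omega
  | succ n ih =>
    have hγ : P.γ ∉ Set.Ioo p q := h _ (by simp [cuts])
    have h2 : P.Uncut n (P.G p) (P.G p + P.sl p * (q - p)) := by
      refine ih (by linarith [mul_pos (P.sl_pos p) (sub_pos.2 hpq)]) fun s hs hsI => ?_
      unfold G sl at hsI
      split_ifs at hsI with hp
      · have hmem : P.a * s ∈ P.cuts (n + 1) := by
          simp only [cuts, Finset.mem_insert, Finset.mem_union, Finset.mem_image]
          exact Or.inr (Or.inl ⟨s, hs, rfl⟩)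
        refine h _ hmem ⟨?_, ?_⟩
        · have := hsI.1; rw [div_lt_iff₀ ha] at this; linarith
        · have := hsI.2
          have h3 : p / P.a + 1 / P.a * (q - p) = q / P.a := by ring
          rw [h3, lt_div_iff₀ ha] at this; linarith
      · have hmem : P.b * s + 1 ∈ P.cuts (n + 1) := by
          simp only [cuts, Finset.mem_insert, Finset.mem_union, Finset.mem_image]
          exact Or.inr (Or.inr ⟨s, hs, rfl⟩)
        refine h _ hmem ⟨?_, ?_⟩
        · have := hsI.1; rw [div_lt_iff₀ hb] at this; linarith
        · have := hsI.2
          have h3 : (p - 1) / P.b + 1 / P.b * (q - p) = (q - 1) / P.b := by ring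
          rw [h3, lt_div_iff₀ hb] at this; linarith
    intro k hk
    cases k with
    | zero => simpa [D] using hγ
    | succ k =>
      have := h2 k (by omega)
      rw [Function.iterate_succ_apply, D_succ', mul_assoc]
      convert this using 4
      ring

end Param

/-! ### Combinations of intervals and their growth -/

namespace Param

variable {P : Param}

/-- The finite nonnegative combinations of Lebesgue measures on intervals `[p, q) ⊆ [A, B)`. The
first index is the sum of the coefficients, which bounds the density of the measure and controls
how much of its mass sits on short intervals. It depends on the chosen representation, which need
not be unique. -/
inductive Fam (P : Param) : ℝ≥0∞ → Measure ℝ → Prop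
  | zero : Fam P 0 0
  | cons (c z : ℝ≥0∞) (ρ : Measure ℝ) (p q : ℝ) (hp : P.A ≤ p) (hpq : p < q) (hq : q ≤ P.B)
      (h : Fam P z ρ) : Fam P (c + z) (c • (volume : Measure ℝ).restrict (Set.Ico p q) + ρ)

lemma Fam.single (c : ℝ≥0∞) {p q : ℝ} (hp : P.A ≤ p) (hpq : p < q) (hq : q ≤ P.B) :
    P.Fam c (c • (volume : Measure ℝ).restrict (Set.Ico p q)) := by
  simpa using Fam.cons c 0 0 p q hp hpq hq .zero

lemma Fam.add {z w : ℝ≥0∞} {ρ η : Measure ℝ} (h : P.Fam z ρ) (h' : P.Fam w η) :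
    P.Fam (z + w) (ρ + η) := by
  induction h with
  | zero => simpa using h'
  | cons c z ρ p q hp hpq hq _ ih =>
    rw [add_assoc, add_assoc]
    exact .cons c _ _ p q hp hpq hq ih

lemma Fam.smul {z : ℝ≥0∞} {ρ : Measure ℝ} (h : P.Fam z ρ) (t : ℝ≥0∞) :
    P.Fam (t * z) (t • ρ) := by
  induction h with
  | zero => simpa using Fam.zero
  | cons c z ρ p q hp hpq hq _ ih =>
    rw [mul_add, smul_add, smul_smul]
    exact .cons _ _ _ p q hp hpq hq ih

/-- A bound for the images of single intervals extends linearly to combinations of intervals. -/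
lemma Fam.map_of_single {f : ℝ → ℝ} (hf : Measurable f) {L K : ℝ≥0∞}
    (h : ∀ p q, P.A ≤ p → p < q → q ≤ P.B → ∃ z,
      P.Fam z (((volume : Measure ℝ).restrict (Set.Ico p q)).map f) ∧
        z ≤ L + K * volume (Set.Ico p q))
    {z : ℝ≥0∞} {ρ : Measure ℝ} (hρ : P.Fam z ρ) :
    ∃ z', P.Fam z' (ρ.map f) ∧ z' ≤ L * z + K * ρ Set.univ := by
  induction hρ with
  | zero => exact ⟨0, by simpa using Fam.zero, by simp⟩
  | cons c z ρ p q hp hpq hq _ ih =>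
    obtain ⟨z₁, h1, h1'⟩ := ih
    obtain ⟨z₂, h2, h2'⟩ := h p q hp hpq hq
    refine ⟨c * z₂ + z₁, ?_, ?_⟩
    · rw [Measure.map_add _ _ hf, Measure.map_smul]
      exact (h2.smul c).add h1
    · calc c * z₂ + z₁ ≤ c * (L + K * volume (Set.Ico p q)) + (L * z + K * ρ Set.univ) := by
            gcongr
        _ = _ := by
            simp only [Measure.add_apply, Measure.smul_apply, smul_eq_mul, Measure.restrict_apply,
              MeasurableSet.univ, Set.univ_inter]
            ring

lemma Fam.le {z : ℝ≥0∞} {ρ : Measure ℝ} (h : P.Fam z ρ) (E : Set ℝ) :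
    ρ E ≤ z * volume E := by
  induction h with
  | zero => simp
  | cons c z ρ p q hp hpq hq _ ih =>
    rw [Measure.add_apply, Measure.smul_apply, smul_eq_mul, add_mul]
    gcongr
    exact Measure.restrict_le_self

/-- If `S` fills a definite part of every interval, except possibly those of length at most `ℓ`,
then `S` carries a definite part of `ρ`, up to an error proportional to the coefficient sum. -/
lemma Fam.univ_le {z : ℝ≥0∞} {ρ : Measure ℝ} (h : P.Fam z ρ) {S : Set ℝ} (hS : MeasurableSet S)
    {ℓ Q : ℝ≥0∞} (hI : ∀ p q, P.A ≤ p → p < q → q ≤ P.B →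
      volume (Set.Ico p q) ≤ ℓ + Q * volume (S ∩ Set.Ico p q)) :
    ρ Set.univ ≤ ℓ * z + Q * ρ S := by
  induction h with
  | zero => simp
  | cons c z ρ p q hp hpq hq _ ih =>
    simp only [Measure.add_apply, Measure.smul_apply, smul_eq_mul, Measure.restrict_apply,
              MeasurableSet.univ, Set.univ_inter, hS]
    calc c * volume (Set.Ico p q) + ρ Set.univ
        ≤ c * (ℓ + Q * volume (S ∩ Set.Ico p q)) + (ℓ * z + Q * ρ S) := by
          gcongr; exact hI p q hp hpq hq
      _ = _ := by ring

lemma Uncut.fam {n : ℕ} {p q : ℝ} (h : P.Uncut n p q) (hp : P.A ≤ p) (hpq : p < q)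
    (hq : q ≤ P.B) :
    P.Fam (ENNReal.ofReal (P.D n p)⁻¹)
      (((volume : Measure ℝ).restrict (Set.Ico p q)).map P.G^[n]) := by
  rw [h.map]
  refine Fam.single _ ?_ ?_ (h.end_le hq)
  · exact (P.iterate_G_mem ⟨hp, hpq.trans_le hq⟩ n).1
  · linarith [mul_pos (P.D_pos n p) (sub_pos.2 hpq)]

/-- An interval with at most one possible discontinuity of `G^[n]` has at most two pieces as its
image, each with coefficient the inverse of the slope. -/
lemma exists_fam_of_one_cut {n : ℕ} {p q s u : ℝ} (hp : P.A ≤ p) (hpq : p < q)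
    (hq : q ≤ P.B) (hs : ∀ t ∈ P.cuts n, t ∈ Set.Ioo p q → t = s)
    (hu : ∀ y ∈ Set.Ico P.A P.B, (P.D n y)⁻¹ ≤ u) :
    ∃ z, P.Fam z (((volume : Measure ℝ).restrict (Set.Ico p q)).map P.G^[n]) ∧
      z ≤ 2 * ENNReal.ofReal u := by
  by_cases hsI : s ∈ Set.Ioo p q
  · have h1 : P.Uncut n p s := P.uncut_of_cuts hsI.1 fun t ht htI =>
      htI.2.ne (hs t ht ⟨htI.1, htI.2.trans hsI.2⟩)
    have h2 : P.Uncut n s q := P.uncut_of_cuts hsI.2 fun t ht htI =>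
      htI.1.ne' (hs t ht ⟨hsI.1.trans htI.1, htI.2⟩)
    refine ⟨ENNReal.ofReal (P.D n p)⁻¹ + ENNReal.ofReal (P.D n s)⁻¹, ?_, ?_⟩
    · rw [← Set.Ico_union_Ico_eq_Ico hsI.1.le hsI.2.le, Measure.restrict_union
        (Set.Ico_disjoint_Ico_same) measurableSet_Ico,
        Measure.map_add _ _ (P.measurable_G.iterate n)]
      exact (h1.fam hp hsI.1 (hsI.2.le.trans hq)).add (h2.fam (hp.trans hsI.1.le) hsI.2 hq)
    · rw [two_mul]
      gcongr
      · exact hu _ ⟨hp, hpq.trans_le hq⟩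
      · exact hu _ ⟨hp.trans hsI.1.le, hsI.2.trans_le hq⟩
  · refine ⟨_, (P.uncut_of_cuts hpq fun t ht htI => hsI (hs t ht htI ▸ htI)).fam hp hpq hq, ?_⟩
    rw [two_mul]
    exact le_add_right (ENNReal.ofReal_le_ofReal (hu _ ⟨hp, hpq.trans_le hq⟩))

lemma Fam.map_iterate {z : ℝ≥0∞} {ρ : Measure ℝ} (h : P.Fam z ρ) (n : ℕ) :
    ∃ z', P.Fam z' (ρ.map P.G^[n]) ∧ z' ≤ (2 * ENNReal.ofReal P.b) ^ n * z := by
  induction n with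
  | zero => exact ⟨z, by simpa using h, by simp⟩
  | succ n ih =>
    obtain ⟨z₁, h1, h1'⟩ := ih
    obtain ⟨z₂, h2, h2'⟩ := h1.map_of_single (K := 0) (L := 2 * ENNReal.ofReal P.b) P.measurable_G
      fun p q hp hpq hq => by
        obtain ⟨z, hz, hz'⟩ := exists_fam_of_one_cut (n := 1) (s := P.γ) (u := P.b) hp hpq hq
          (fun t ht _ => by simpa [cuts] using ht)
          (fun y _ => by
            have hb := P.hb0
            have h1 : P.D 1 y = P.sl y := by simp [D]
            rw [h1]
            unfold sl
            split_ifs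
            · rw [one_div, inv_inv]
              linarith [P.ha1, P.hb]
            · rw [one_div, inv_inv])
        exact ⟨z, by simpa using hz, by simpa using hz'⟩
    refine ⟨z₂, ?_, h2'.trans ?_⟩
    · rw [Function.iterate_succ', ← Measure.map_map P.measurable_G (P.measurable_G.iterate n)]
      exact h2
    · rw [zero_mul, add_zero, pow_succ' (2 * ENNReal.ofReal P.b), mul_assoc (2 * ENNReal.ofReal P.b)]
      exact mul_le_mul_right h1' _

lemma exists_gap (S : Finset ℝ) : ∃ δ : ℝ, 0 < δ ∧ ∀ s ∈ S, ∀ t ∈ S, s ≠ t → δ ≤ |s - t| := by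
  classical
  induction S using Finset.induction_on with
  | empty => exact ⟨1, one_pos, by simp⟩
  | insert x S hx ih =>
    obtain ⟨δ, hδ, h⟩ := ih
    obtain ⟨δ', hδ', h'⟩ : ∃ δ' : ℝ, 0 < δ' ∧ ∀ s ∈ S, δ' ≤ |s - x| := by
      rcases S.eq_empty_or_nonempty with rfl | hS
      · exact ⟨1, one_pos, by simp⟩
      · obtain ⟨m, hm, hm'⟩ := S.exists_min_image (fun s => |s - x|) hS
        exact ⟨|m - x|, abs_pos.2 (sub_ne_zero.2 fun h => hx (h ▸ hm)), hm'⟩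
    refine ⟨min δ δ', lt_min hδ hδ', fun s hs t ht hst => ?_⟩
    rw [Finset.mem_insert] at hs ht
    rcases hs with rfl | hs <;> rcases ht with rfl | ht
    · exact absurd rfl hst
    · rw [abs_sub_comm]; exact (min_le_right _ _).trans (h' t ht)
    · exact (min_le_right _ _).trans (h' s hs)
    · exact (min_le_left _ _).trans (h s hs t ht hst)

variable (P) in
/-- The growth lemma: some iterate of `G` halves the coefficient sum, up to a multiple of the total
mass. Intervals shorter than the gap between discontinuities of the iterate are cut only once and
expansion beats this doubling; for longer intervals the crude bound is proportional to length. -/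
lemma exists_growth : ∃ (N : ℕ) (K : ℝ≥0∞), 0 < N ∧ K ≠ ⊤ ∧ ∀ z ρ, P.Fam z ρ →
    ∃ z', P.Fam z' (ρ.map P.G^[N]) ∧ z' ≤ 2⁻¹ * z + K * ρ Set.univ := by
  obtain ⟨c, r, hc, hr, hD⟩ := P.exists_D_lower
  -- Slopes of at least `4` compensate for the two pieces of a cut and leave a factor `1 / 2`.
  obtain ⟨N, hN⟩ := pow_unbounded_of_one_lt (4 / c) hr
  have hD4 : ∀ y ∈ Set.Ico P.A P.B, (P.D (N + 1) y)⁻¹ ≤ 1 / 4 := by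
    intro y hy
    have h1 := hD (N + 1) y hy
    rw [div_lt_iff₀ hc] at hN
    have h2 : r ^ N ≤ r ^ (N + 1) := pow_le_pow_right₀ hr.le (Nat.le_succ _)
    rw [inv_le_comm₀ (P.D_pos _ _) (by norm_num)]
    nlinarith
  obtain ⟨δ, hδ, hgap⟩ := exists_gap (P.cuts (N + 1))
  refine ⟨N + 1, (2 * ENNReal.ofReal P.b) ^ (N + 1) * ENNReal.ofReal δ⁻¹, N.succ_pos, ?_,
    fun z ρ h => h.map_of_single (P.measurable_G.iterate _) ?_⟩
  · finiteness
  · intro p q hp hpq hq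
    by_cases hlen : q - p < δ
    · obtain ⟨s, hs⟩ : ∃ s, ∀ t ∈ P.cuts (N + 1), t ∈ Set.Ioo p q → t = s := by
        by_cases hex : ∃ s ∈ P.cuts (N + 1), s ∈ Set.Ioo p q
        · obtain ⟨s, hs, hsI⟩ := hex
          refine ⟨s, fun t ht htI => ?_⟩
          by_contra hne
          have := hgap t ht s hs hne
          have h2 : |t - s| < q - p := by
            rw [abs_lt]; constructor <;> linarith [hsI.1, hsI.2, htI.1, htI.2]
          linarith
        · push Not at hex
          exact ⟨0, fun t ht htI => absurd htI (hex t ht)⟩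
      obtain ⟨z, hz, hz'⟩ := exists_fam_of_one_cut hp hpq hq hs hD4
      refine ⟨z, hz, hz'.trans (le_add_right ?_)⟩
      rw [show (2 : ℝ≥0∞) = ENNReal.ofReal 2 by simp, ← ENNReal.ofReal_mul (by norm_num),
        ← ENNReal.ofReal_inv_of_pos (by norm_num)]
      exact ENNReal.ofReal_le_ofReal (by norm_num)
    · obtain ⟨z, hz, hz'⟩ := (Fam.single 1 hp hpq hq).map_iterate (N + 1)
      refine ⟨z, by simpa using hz, hz'.trans (le_add_left ?_)⟩
      rw [mul_assoc]
      gcongr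
      rw [Real.volume_Ico, ← ENNReal.ofReal_mul (by positivity), ENNReal.one_le_ofReal,
        inv_mul_eq_div, le_div_iff₀ hδ]
      linarith

variable (P) in
/-- Iterated growth lemma: the initial coefficient sum is forgotten at an exponential rate. -/
lemma exists_growth_iterate : ∃ (N : ℕ) (K : ℝ≥0∞), 0 < N ∧ K ≠ ⊤ ∧ K ≠ 0 ∧ ∀ z ρ, P.Fam z ρ →
    ∀ k, ∃ z', P.Fam z' (ρ.map P.G^[N * k]) ∧ z' ≤ 2⁻¹ ^ k * z + K * ρ Set.univ := by
  obtain ⟨N, K, hN, hK, h⟩ := P.exists_growth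
  refine ⟨N, 2 * K + 1, hN, by finiteness, by simp, fun z ρ hρ k => ?_⟩
  suffices ∃ z', P.Fam z' (ρ.map P.G^[N * k]) ∧ z' ≤ 2⁻¹ ^ k * z + 2 * K * ρ Set.univ by
    obtain ⟨z', h1, h2⟩ := this
    exact ⟨z', h1, h2.trans (by gcongr; exact le_self_add)⟩
  induction k with
  | zero => exact ⟨z, by simpa using hρ, by simp⟩
  | succ k ih =>
    obtain ⟨z₁, h1, h1'⟩ := ih
    obtain ⟨z₂, h2, h2'⟩ := h _ _ h1
    refine ⟨z₂, ?_, h2'.trans ?_⟩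
    · rw [mul_add, mul_one, add_comm, Function.iterate_add, ← Measure.map_map
        (P.measurable_G.iterate _) (P.measurable_G.iterate _)]
      exact h2
    · rw [Measure.map_apply (P.measurable_G.iterate _) .univ, Set.preimage_univ]
      calc 2⁻¹ * z₁ + K * ρ Set.univ
          ≤ 2⁻¹ * (2⁻¹ ^ k * z + 2 * K * ρ Set.univ) + K * ρ Set.univ := by gcongr
        _ = 2⁻¹ ^ (k + 1) * z + (2⁻¹ * 2) * K * ρ Set.univ + K * ρ Set.univ := by ring
        _ = _ := by
          rw [ENNReal.inv_mul_cancel (by simp) (by simp)]; ring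

variable (P) in
/-- All images of Lebesgue measure on `[A, B)` under the iterates of `G` have densities bounded by one
constant. -/
lemma exists_uniform_bound : ∃ C : ℝ≥0∞, C ≠ ⊤ ∧ ∀ (n : ℕ) (E : Set ℝ),
    (((volume : Measure ℝ).restrict (Set.Ico P.A P.B)).map P.G^[n]) E ≤ C * volume E := by
  obtain ⟨N, K, hN, hK, -, h⟩ := P.exists_growth_iterate
  have hAB : P.A < P.B := P.A_lt_γ.trans P.γ_lt_B
  set ρ : Measure ℝ := (volume : Measure ℝ).restrict (Set.Ico P.A P.B) with hρ
  have hρF : P.Fam 1 ρ := by simpa using Fam.single 1 le_rfl hAB le_rfl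
  have hρu : ρ Set.univ ≠ ⊤ := by simp [hρ]
  refine ⟨(2 * ENNReal.ofReal P.b) ^ N * (1 + K * ρ Set.univ), by finiteness, fun n E => ?_⟩
  obtain ⟨z₁, h1, h1'⟩ := h _ _ hρF (n / N)
  obtain ⟨z₂, h2, h2'⟩ := h1.map_iterate (n % N)
  rw [Measure.map_map (P.measurable_G.iterate _) (P.measurable_G.iterate _),
    ← Function.iterate_add, Nat.mod_add_div] at h2
  refine (h2.le E).trans ?_
  gcongr
  refine h2'.trans ?_
  gcongr
  · calc (1 : ℝ≥0∞) ≤ ENNReal.ofReal P.b := by simpa using P.hb.le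
      _ ≤ _ := le_mul_of_one_le_left' (by norm_num)
  · exact (Nat.mod_lt n hN).le
  · refine h1'.trans ?_
    gcongr
    rw [mul_one]
    exact pow_le_one' (by simp) _

end Param

/-! ### Existence of an invariant measure -/

open Topology in
/-- If the measures `m ∘ (G^[n])⁻¹` are bounded by one multiple of the finite measure `m`, then `G`
has an absolutely continuous invariant probability measure. It is the normalised limit of the Cesàro
averages along a nonprincipal ultrafilter; domination by `C * m` makes this limit countably
additive. -/
lemma exists_invariant_measure {X : Type*} [MeasurableSpace X] (m : Measure X) [IsFiniteMeasure m]
    (hm : m Set.univ ≠ 0) {G : X → X} (hG : Measurable G) {C : ℝ≥0∞} (hC : C ≠ ⊤)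
    (h : ∀ n E, MeasurableSet E → m (G^[n] ⁻¹' E) ≤ C * m E) :
    ∃ μ : Measure X, IsProbabilityMeasure μ ∧ MeasurePreserving G μ μ ∧ μ ≪ m := by
  classical
  set av : ℕ → Set X → ℝ≥0∞ := fun n E =>
    ((n : ℝ≥0∞) + 1)⁻¹ * ∑ k ∈ Finset.range (n + 1), m (G^[k] ⁻¹' E) with hav
  have hn0 : ∀ n : ℕ, ((n : ℝ≥0∞) + 1) ≠ 0 := fun n => by simp
  have hnt : ∀ n : ℕ, ((n : ℝ≥0∞) + 1) ≠ ⊤ := fun n => by finiteness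
  have hlim : ∀ E, ∃ L, Tendsto (fun n => av n E) (hyperfilter ℕ : Filter ℕ) (𝓝 L) := fun E =>
    ⟨_, ((hyperfilter ℕ).map fun n => av n E).le_nhds_lim⟩
  choose f hf using hlim
  have hf0 : f ∅ = 0 := tendsto_nhds_unique (hf ∅) (by simp [hav])
  have hle : ∀ E, MeasurableSet E → f E ≤ C * m E := fun E hE =>
    le_of_tendsto (hf E) <| Eventually.of_forall fun n => by
      simp only [hav]
      calc _ ≤ ((n : ℝ≥0∞) + 1)⁻¹ * ∑ k ∈ Finset.range (n + 1), C * m E := by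
            gcongr; exact h _ _ hE
        _ = _ := by
            rw [Finset.sum_const, Finset.card_range, nsmul_eq_mul, ← mul_assoc]
            push_cast
            rw [ENNReal.inv_mul_cancel (hn0 n) (hnt n), one_mul]
  have hadd : ∀ E F, MeasurableSet F → Disjoint E F → f (E ∪ F) = f E + f F := by
    intro E F hF hEF
    refine tendsto_nhds_unique (hf _) (((hf E).add (hf F)).congr fun n => ?_)
    simp only [hav]
    rw [← mul_add, ← Finset.sum_add_distrib]
    congr 1
    refine Finset.sum_congr rfl fun k _ => ?_
    rw [Set.preimage_union, measure_union (hEF.preimage _) (hG.iterate k hF)]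
  have huniv : f Set.univ = m Set.univ := by
    refine tendsto_nhds_unique (hf _) (tendsto_const_nhds.congr fun n => ?_)
    simp only [hav, Set.preimage_univ, Finset.sum_const, Finset.card_range, nsmul_eq_mul]
    push_cast
    rw [← mul_assoc, ENNReal.inv_mul_cancel (hn0 n) (hnt n), one_mul]
  have hinv : ∀ E, f (G ⁻¹' E) ≤ f E := by
    intro E
    have h0 : Tendsto (fun n : ℕ => ((n : ℝ≥0∞) + 1)⁻¹ * m Set.univ) (hyperfilter ℕ : Filter ℕ)
        (𝓝 0) := by
      refine Tendsto.mono_left ?_ Nat.hyperfilter_le_atTop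
      rw [← zero_mul (m Set.univ)]
      refine ENNReal.Tendsto.mul_const ?_ (Or.inr (measure_ne_top _ _))
      have := (tendsto_add_atTop_iff_nat 1).2 ENNReal.tendsto_inv_nat_nhds_zero
      simpa using this
    have h1 := (hf E).add h0
    rw [add_zero] at h1
    refine le_of_tendsto_of_tendsto' (hf _) h1 fun n => ?_
    simp only [hav]
    rw [← mul_add]
    gcongr
    have : ∀ k, m (G^[k] ⁻¹' (G ⁻¹' E)) = m (G^[k + 1] ⁻¹' E) := fun k => by
      rw [Function.iterate_succ', Set.preimage_comp]
    simp only [this]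
    rw [Finset.sum_range_succ]
    gcongr
    · rw [Finset.sum_range_succ' (fun k => m (G^[k] ⁻¹' E))]
      exact le_self_add
    · exact Set.subset_univ _
  have hsig : ∀ E : ℕ → Set X, (∀ i, MeasurableSet (E i)) → Pairwise (Function.onFun Disjoint E) →
      f (⋃ i, E i) = ∑' i, f (E i) := by
    intro E hE hd
    have hsplit : ∀ n, f (⋃ i, E i) = ∑ i ∈ Finset.range n, f (E i) + f (⋃ i, E (i + n)) := by
      intro n
      induction n with
      | zero => simp
      | succ n ih =>
        have : (⋃ i, E (i + n)) = E n ∪ ⋃ i, E (i + (n + 1)) := by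
          ext x
          simp only [Set.mem_iUnion, Set.mem_union]
          constructor
          · rintro ⟨i, hi⟩
            cases i with
            | zero => left; simpa using hi
            | succ i => right; exact ⟨i, by rwa [add_right_comm] at hi⟩
          · rintro (hx | ⟨i, hi⟩)
            · exact ⟨0, by simpa using hx⟩
            · exact ⟨i + 1, by rwa [add_right_comm]⟩
        rw [ih, Finset.sum_range_succ, this, hadd _ _ (.iUnion fun i => hE _), add_assoc]
        rw [Set.disjoint_iUnion_right]
        exact fun i => hd (by omega)
    refine le_antisymm ?_ ?_
    · have htail : Tendsto (fun n => ∑' i, f (E i) + C * ∑' i, m (E (i + n))) atTop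
          (𝓝 (∑' i, f (E i) + C * 0)) := by
        refine tendsto_const_nhds.add (ENNReal.Tendsto.const_mul ?_ (Or.inr hC))
        refine ENNReal.tendsto_sum_nat_add (fun i => m (E i)) ?_
        rw [← measure_iUnion hd hE]
        exact measure_ne_top _ _
      rw [mul_zero, add_zero] at htail
      refine ge_of_tendsto' htail fun n => ?_
      rw [hsplit n]
      gcongr
      · exact ENNReal.sum_le_tsum _
      · refine (hle _ (.iUnion fun i => hE _)).trans ?_
        gcongr
        exact measure_iUnion_le _
    · refine ENNReal.tsum_le_of_sum_range_le fun n => ?_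
      rw [hsplit n]
      exact le_self_add
  set μ₀ : Measure X := Measure.ofMeasurable (fun s _ => f s) hf0 fun E hE hd => hsig E hE hd
    with hμ₀
  have hμf : ∀ E, MeasurableSet E → μ₀ E = f E := fun E hE => Measure.ofMeasurable_apply E hE
  have hμu : μ₀ Set.univ = m Set.univ := by rw [hμf _ .univ, huniv]
  have : IsFiniteMeasure μ₀ := ⟨by rw [hμu]; exact measure_lt_top _ _⟩
  have hmap : μ₀.map G = μ₀ := by
    refine Measure.eq_of_le_of_measure_univ_eq (Measure.le_iff.2 fun E hE => ?_) ?_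
    · rw [Measure.map_apply hG hE, hμf _ (hG hE), hμf _ hE]
      exact hinv E
    · rw [Measure.map_apply hG .univ, Set.preimage_univ]
  refine ⟨(μ₀ Set.univ)⁻¹ • μ₀, ⟨?_⟩, ⟨hG, by rw [Measure.map_smul, hmap]⟩, ?_⟩
  · rw [Measure.smul_apply, smul_eq_mul, ENNReal.inv_mul_cancel (by rwa [hμu]) (measure_ne_top _ _)]
  · refine Measure.AbsolutelyContinuous.smul_left ?_ _
    refine Measure.AbsolutelyContinuous.mk fun E hE h0 => ?_
    rw [hμf _ hE]
    simpa [h0] using hle E hE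

/-! ### Intervals inside forward invariant sets -/

namespace Param

variable {P : Param}

/-- Every subinterval of `[A, B)` is stretched affinely until `γ` lies in the interior of its image,
since its length would otherwise grow beyond bounds. -/
lemma Uncut.exists_first {p q : ℝ} (hp : P.A ≤ p) (hpq : p < q) (hq : q ≤ P.B) :
    ∃ n, P.Uncut n p q ∧ P.γ ∈ Set.Ioo (P.G^[n] p) (P.G^[n] p + P.D n p * (q - p)) := by
  classical
  have hex : ∃ n, P.γ ∈ Set.Ioo (P.G^[n] p) (P.G^[n] p + P.D n p * (q - p)) := by
    by_contra! hno
    obtain ⟨c, r, hc, hr, hD⟩ := P.exists_D_lower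
    have hmem : p ∈ Set.Ico P.A P.B := ⟨hp, hpq.trans_le hq⟩
    have hcq : 0 < c * (q - p) := mul_pos hc (sub_pos.2 hpq)
    obtain ⟨n, hn⟩ := pow_unbounded_of_one_lt (P.B / (c * (q - p))) hr
    have hun : P.Uncut n p q := fun k _ => hno k
    have h1 := hun.end_le hq
    have h2 := (P.iterate_G_mem hmem n).1
    have h3 := mul_le_mul_of_nonneg_right (hD n p hmem) (sub_pos.2 hpq).le
    rw [div_lt_iff₀ hcq] at hn
    nlinarith [P.A_pos]
  exact ⟨Nat.find hex, fun k hk => Nat.find_min hex hk, Nat.find_spec hex⟩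

/-- If `E` almost fills `[p, q)` in the measure sense and `G^[n] E ⊆ E` up to a null set, then `E`
almost fills the affine image of `[p, q)` as well. -/
lemma Uncut.null_image {n : ℕ} {p q : ℝ} (h : P.Uncut n p q) {E : Set ℝ} (hE : MeasurableSet E)
    (hpq : volume (Set.Ico p q \ E) = 0) (hinv : volume (E \ P.G^[n] ⁻¹' E) = 0) :
    volume (Set.Ico (P.G^[n] p) (P.G^[n] p + P.D n p * (q - p)) \ E) = 0 := by
  have h1 := congrArg (fun m : Measure ℝ => m Eᶜ) h.map
  simp only [Measure.smul_apply, smul_eq_mul] at h1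
  rw [Measure.map_apply (P.measurable_G.iterate n) hE.compl,
    Measure.restrict_apply (P.measurable_G.iterate n hE.compl),
    Measure.restrict_apply hE.compl] at h1
  have h2 : volume (P.G^[n] ⁻¹' Eᶜ ∩ Set.Ico p q) = 0 := by
    refine measure_mono_null (fun y hy => ?_) (measure_union_null hpq hinv)
    by_cases hyE : y ∈ E
    · exact Or.inr ⟨hyE, hy.1⟩
    · exact Or.inl ⟨hy.2, hyE⟩
  rw [h2, zero_eq_mul] at h1
  rcases h1 with h1 | h1
  · rw [ENNReal.ofReal_eq_zero] at h1
    exact absurd (inv_pos.2 (P.D_pos n p)) (not_lt.2 h1)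
  · rwa [Set.inter_comm, ← Set.sdiff_eq] at h1

/-- A set that `G` maps into itself up to a null set is also mapped into itself by every iterate, up
to a null set. This uses that preimages of null sets under the iterates are null. -/
lemma null_iterate {E : Set ℝ} (hE : MeasurableSet E) (hsub : E ⊆ Set.Ico P.A P.B)
    (hinv : volume (E \ P.G ⁻¹' E) = 0) (n : ℕ) : volume (E \ P.G^[n] ⁻¹' E) = 0 := by
  obtain ⟨C, -, hC⟩ := P.exists_uniform_bound
  induction n with
  | zero => simp
  | succ n ih =>
    have h1 := hC n (E \ P.G ⁻¹' E)
    rw [hinv, mul_zero, nonpos_iff_eq_zero, Measure.map_apply (P.measurable_G.iterate n)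
      (hE.diff (P.measurable_G hE)), Measure.restrict_apply (P.measurable_G.iterate n
      (hE.diff (P.measurable_G hE)))] at h1
    refine measure_mono_null (fun y hy => ?_) (measure_union_null ih h1)
    by_cases hyE : P.G^[n] y ∈ E
    · refine Or.inr ⟨⟨hyE, fun h => hy.2 ?_⟩, hsub hy.1⟩
      rw [Set.mem_preimage, Function.iterate_succ_apply']
      exact h
    · exact Or.inl ⟨hy.1, hyE⟩

open Topology in
/-- Lebesgue density theorem: arbitrarily small relative complement on a suitable interval. -/
lemma exists_dense_interval {E : Set ℝ} (hE : MeasurableSet E) (hsub : E ⊆ Set.Ico P.A P.B)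
    (hpos : volume E ≠ 0) {ε : ℝ≥0∞} (hε : 0 < ε) :
    ∃ p q, P.A ≤ p ∧ p < q ∧ q ≤ P.B ∧
      volume (Eᶜ ∩ Set.Ico p q) ≤ ε * volume (Set.Ico p q) := by
  have hd := Besicovitch.ae_tendsto_measure_inter_div_of_measurableSet (volume : Measure ℝ)
    hE.compl
  have hA : ∀ᵐ x : ℝ, x ≠ P.A := by simp [ae_iff]
  obtain ⟨x, hxE, hx, hxA⟩ : ∃ x ∈ E, Tendsto (fun r => volume (Eᶜ ∩ Metric.closedBall x r) /
      volume (Metric.closedBall x r)) (𝓝[>] 0) (𝓝 (Eᶜ.indicator 1 x)) ∧ x ≠ P.A := by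
    by_contra! hno
    refine hpos ?_
    rw [measure_eq_zero_iff_ae_notMem]
    filter_upwards [hd, hA] with x h1 h2 hxE
    exact h2 (hno x hxE h1)
  rw [Set.indicator_of_notMem (by simpa using hxE)] at hx
  have hx1 : P.A < x := lt_of_le_of_ne (hsub hxE).1 hxA.symm
  have hx2 : x < P.B := (hsub hxE).2
  have hsmall : ∀ᶠ r in 𝓝[>] (0 : ℝ), r < min (x - P.A) (P.B - x) :=
    nhdsWithin_le_nhds (Iio_mem_nhds (lt_min (by linarith) (by linarith)))
  obtain ⟨r, hr1, hr2, hr3⟩ := ((hx.eventually (Iio_mem_nhds hε)).and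
    (hsmall.and self_mem_nhdsWithin)).exists
  have hr0 : (0 : ℝ) < r := hr3
  have hra := hr2.trans_le (min_le_left _ _)
  have hrb := hr2.trans_le (min_le_right _ _)
  refine ⟨x - r, x + r, by linarith, by linarith, by linarith, ?_⟩
  have hvol : volume (Metric.closedBall x r) = volume (Set.Ico (x - r) (x + r)) := by
    rw [Real.closedBall_eq_Icc, Real.volume_Icc, Real.volume_Ico]
  rw [hvol] at hr1
  have hle := hr1.le
  rw [ENNReal.div_le_iff (by simp [hr0]) (by simp)] at hle
  refine (measure_mono ?_).trans hle
  rw [Real.closedBall_eq_Icc]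
  exact Set.inter_subset_inter_right _ Set.Ico_subset_Icc_self

/-- The complement of an essentially forward invariant set of positive measure can be made
arbitrarily small on intervals of length bounded below. Indeed, a tiny interval with small relative
complement is spread out by the growth lemma over intervals that are mostly of length at least `ℓ`;
if the complement took a definite part of all of these, it would have had a definite part of the
tiny interval. -/
lemma exists_long_interval {E : Set ℝ} (hE : MeasurableSet E) (hsub : E ⊆ Set.Ico P.A P.B)
    (hpos : volume E ≠ 0) (hinv : volume (E \ P.G ⁻¹' E) = 0) :
    ∃ ℓ : ℝ, 0 < ℓ ∧ ∀ ε : ℝ, 0 < ε → ∃ p q, P.A ≤ p ∧ q ≤ P.B ∧ ℓ ≤ q - p ∧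
      volume (Eᶜ ∩ Set.Ico p q) ≤ ENNReal.ofReal ε := by
  obtain ⟨N, K, hN, hK, hK0, hgr⟩ := P.exists_growth_iterate
  have hK2 : 2 * K ≠ ⊤ := by finiteness
  have hK4 : 4 * (2 * K) ≠ ⊤ := by finiteness
  have hℓ0 : (4 * (2 * K))⁻¹ ≠ 0 := ENNReal.inv_ne_zero.2 hK4
  have hℓt : (4 * (2 * K))⁻¹ ≠ ⊤ := ENNReal.inv_ne_top.2 (by simp [hK0])
  -- After many steps the coefficient sum is at most `2 * K * m`, where `m` is the mass of the initial
  -- interval, so intervals shorter than `1 / (8 * K)` carry at most `m / 4`.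
  refine ⟨((4 * (2 * K))⁻¹).toReal, ENNReal.toReal_pos hℓ0 hℓt, fun ε hε => ?_⟩
  by_contra! hno
  -- A long interval has length at most `B - A` and complement at least `ε`, hence this ratio.
  set Q : ℝ≥0∞ := ENNReal.ofReal ((P.B - P.A) / ε) with hQ
  obtain ⟨p, q, hp, hpq, hq, hd⟩ := exists_dense_interval hE hsub hpos (ε := (4 * (Q + 1))⁻¹)
    (ENNReal.inv_pos.2 (by finiteness))
  set m := volume (Set.Ico p q) with hm
  have hm0 : m ≠ 0 := by simp [hm, hpq]
  have hmt : m ≠ ⊤ := by simp [hm]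
  obtain ⟨k, hk⟩ : ∃ k : ℕ, (2⁻¹ : ℝ≥0∞) ^ k < K * m :=
    ((ENNReal.tendsto_pow_atTop_nhds_zero_of_lt_one (by norm_num)).eventually
      (Iio_mem_nhds (mul_ne_zero hK0 hm0).bot_lt)).exists
  obtain ⟨z, hz, hz'⟩ := hgr _ _ (Fam.single 1 hp hpq hq) k
  have hzm : z ≤ 2 * K * m := by
    refine hz'.trans ?_
    simp only [one_smul, mul_one, Measure.restrict_apply, MeasurableSet.univ, Set.univ_inter]
    calc _ ≤ K * m + K * m := by gcongr
      _ = _ := by ring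
  have hu := hz.univ_le hE.compl (ℓ := (4 * (2 * K))⁻¹) (Q := Q) fun p' q' hp' hpq' hq' => by
    by_cases hl : ((4 * (2 * K))⁻¹).toReal ≤ q' - p'
    · refine le_add_left ?_
      have h1 := (hno p' q' hp' hq' hl).le
      calc volume (Set.Ico p' q') ≤ Q * ENNReal.ofReal ε := by
            rw [hQ, ← ENNReal.ofReal_mul (div_nonneg (by linarith) hε.le), Real.volume_Ico,
              div_mul_cancel₀ _ hε.ne']
            exact ENNReal.ofReal_le_ofReal (by linarith)
        _ ≤ _ := by gcongr
    · refine le_add_right ?_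
      rw [Real.volume_Ico, ENNReal.ofReal_le_iff_le_toReal hℓt]
      exact (not_le.1 hl).le
  rw [one_smul, Measure.map_apply (P.measurable_G.iterate _) .univ, Set.preimage_univ,
    Measure.restrict_apply .univ, Set.univ_inter,
    Measure.map_apply (P.measurable_G.iterate _) hE.compl,
    Measure.restrict_apply (P.measurable_G.iterate _ hE.compl)] at hu
  have hsmall : volume (P.G^[N * k] ⁻¹' Eᶜ ∩ Set.Ico p q) ≤ (4 * (Q + 1))⁻¹ * m := by
    refine le_trans ?_ hd
    rw [← add_zero (volume (Eᶜ ∩ _)), ← null_iterate hE hsub hinv (N * k)]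
    refine (measure_mono fun y hy => ?_).trans (measure_union_le _ _)
    by_cases hyE : y ∈ E
    · exact Or.inr ⟨hyE, hy.1⟩
    · exact Or.inl ⟨hyE, hy.2⟩
  have h1 : (4 * (2 * K))⁻¹ * z ≤ 4⁻¹ * m := by
    calc (4 * (2 * K))⁻¹ * z ≤ (4 * (2 * K))⁻¹ * (2 * K * m) := by gcongr
      _ = 4⁻¹ * ((2 * K)⁻¹ * (2 * K)) * m := by
        rw [ENNReal.mul_inv (Or.inl (by simp)) (Or.inl (by simp))]; ring
      _ = _ := by rw [ENNReal.inv_mul_cancel (by simp [hK0]) hK2, mul_one]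
  have h2 : Q * volume (P.G^[N * k] ⁻¹' Eᶜ ∩ Set.Ico p q) ≤ 4⁻¹ * m := by
    calc _ ≤ (Q + 1) * ((4 * (Q + 1))⁻¹ * m) := by gcongr; exact le_self_add
      _ = 4⁻¹ * ((Q + 1)⁻¹ * (Q + 1)) * m := by
        rw [ENNReal.mul_inv (Or.inl (by simp)) (Or.inl (by simp))]; ring
      _ = _ := by rw [ENNReal.inv_mul_cancel (by simp) (by finiteness), mul_one]
  have h3 : m ≤ 2⁻¹ * m := by
    calc m ≤ 4⁻¹ * m + 4⁻¹ * m := hu.trans (add_le_add h1 h2)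
      _ = 2⁻¹ * m := by
        rw [← add_mul, ← two_mul, show (4 : ℝ≥0∞) = 2 * 2 by norm_num,
          ENNReal.mul_inv (by simp) (by simp), ← mul_assoc, ENNReal.mul_inv_cancel (by simp)
          (by simp), one_mul]
  have h4 : 2⁻¹ * m < 1 * m := ENNReal.mul_lt_mul_left hm0 hmt (by norm_num)
  rw [one_mul] at h4
  exact absurd h3 (not_le.2 h4)

open Topology in
/-- An essentially forward invariant set of positive measure fills an interval up to a null set, by
compactness of the set of intervals of length at least `ℓ`. -/
lemma exists_full_interval {E : Set ℝ} (hE : MeasurableSet E) (hsub : E ⊆ Set.Ico P.A P.B)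
    (hpos : volume E ≠ 0) (hinv : volume (E \ P.G ⁻¹' E) = 0) :
    ∃ p q, P.A ≤ p ∧ p < q ∧ q ≤ P.B ∧ volume (Set.Ico p q \ E) = 0 := by
  obtain ⟨ℓ, hℓ, h⟩ := exists_long_interval hE hsub hpos hinv
  choose p q hp hq hpq hv using fun n : ℕ => h (1 / ((n : ℝ) + 1)) Nat.one_div_pos_of_nat
  have hmem : ∀ n, (p n, q n) ∈ Set.Icc P.A P.B ×ˢ Set.Icc P.A P.B := fun n =>
    ⟨⟨hp n, by linarith [hq n, hpq n]⟩, ⟨by linarith [hp n, hpq n], hq n⟩⟩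
  obtain ⟨⟨u, v⟩, huv, φ, hφ, hlim⟩ := (isCompact_Icc.prod isCompact_Icc).tendsto_subseq hmem
  have hu : Tendsto (fun n => p (φ n)) atTop (𝓝 u) := (continuous_fst.tendsto _).comp hlim
  have hv' : Tendsto (fun n => q (φ n)) atTop (𝓝 v) := (continuous_snd.tendsto _).comp hlim
  have hlen : ℓ ≤ v - u := ge_of_tendsto' (hv'.sub hu) fun n => hpq _
  refine ⟨u, v, huv.1.1, by linarith, huv.2.2, ?_⟩
  have hbound : ∀ n, volume (Set.Ico u v \ E) ≤ ENNReal.ofReal (p (φ n) - u) +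
      (ENNReal.ofReal (1 / ((φ n : ℝ) + 1)) + ENNReal.ofReal (v - q (φ n))) := by
    intro n
    refine (measure_mono (t := Set.Ico u (p (φ n)) ∪ ((Eᶜ ∩ Set.Ico (p (φ n)) (q (φ n))) ∪
      Set.Ico (q (φ n)) v)) fun y hy => ?_).trans ((measure_union_le _ _).trans ?_)
    · by_cases h1 : y < p (φ n)
      · exact Or.inl ⟨hy.1.1, h1⟩
      · by_cases h2 : y < q (φ n)
        · exact Or.inr (Or.inl ⟨hy.2, not_lt.1 h1, h2⟩)
        · exact Or.inr (Or.inr ⟨not_lt.1 h2, hy.1.2⟩)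
    · rw [Real.volume_Ico]
      gcongr
      refine (measure_union_le _ _).trans ?_
      rw [Real.volume_Ico]
      gcongr
      exact hv _
  have hz : Tendsto (fun n => ENNReal.ofReal (p (φ n) - u) +
      (ENNReal.ofReal (1 / ((φ n : ℝ) + 1)) + ENNReal.ofReal (v - q (φ n)))) atTop
      (𝓝 (ENNReal.ofReal (u - u) + (ENNReal.ofReal 0 + ENNReal.ofReal (v - v)))) := by
    refine (ENNReal.tendsto_ofReal (hu.sub_const u)).add
      ((ENNReal.tendsto_ofReal ?_).add (ENNReal.tendsto_ofReal (hv'.const_sub v)))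
    exact tendsto_one_div_add_atTop_nhds_zero_nat.comp hφ.tendsto_atTop
  simp only [sub_self, ENNReal.ofReal_zero, add_zero] at hz
  exact nonpos_iff_eq_zero.1 (ge_of_tendsto' hz hbound)

/-- Every essentially forward invariant set of positive measure contains a neighbourhood of `γ` up to
a null set. In particular two such sets always intersect in positive measure. -/
lemma exists_nhds_γ {E : Set ℝ} (hE : MeasurableSet E) (hsub : E ⊆ Set.Ico P.A P.B)
    (hpos : volume E ≠ 0) (hinv : volume (E \ P.G ⁻¹' E) = 0) :
    ∃ l r, P.A ≤ l ∧ l < P.γ ∧ P.γ < r ∧ r ≤ P.B ∧ volume (Set.Ico l r \ E) = 0 := by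
  obtain ⟨p, q, hp, hpq, hq, hv⟩ := exists_full_interval hE hsub hpos hinv
  obtain ⟨n, hn, hγ⟩ := Uncut.exists_first hp hpq hq
  exact ⟨_, _, (P.iterate_G_mem ⟨hp, hpq.trans_le hq⟩ n).1, hγ.1, hγ.2, hn.end_le hq,
    hn.null_image hE hv (null_iterate hE hsub hinv n)⟩

end Param

/-! ### Ergodicity and support of absolutely continuous invariant measures -/

namespace Param

variable {P : Param}

/-- An invariant probability measure of `G`, absolutely continuous on `[A, B)`. -/
structure IsACInv (P : Param) (μ : Measure ℝ) : Prop where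
  prob : IsProbabilityMeasure μ
  mp : MeasurePreserving P.G μ μ
  ac : μ ≪ (volume : Measure ℝ).restrict (Set.Ico P.A P.B)

variable (P) in
lemma exists_isACInv : ∃ μ, P.IsACInv μ := by
  obtain ⟨C, hC, h⟩ := P.exists_uniform_bound
  obtain ⟨μ, h1, h2, h3⟩ := exists_invariant_measure
    ((volume : Measure ℝ).restrict (Set.Ico P.A P.B)) (by simp [P.A_lt_γ.trans P.γ_lt_B])
    P.measurable_G hC fun n E hE => by
      have hmE := P.measurable_G.iterate n hE
      have h0 := h n (E ∩ Set.Ico P.A P.B)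
      rw [Measure.map_apply (P.measurable_G.iterate n) (hE.inter measurableSet_Ico)] at h0
      rw [Measure.restrict_apply hE]
      refine le_trans ?_ h0
      rw [Measure.restrict_apply hmE, Measure.restrict_apply
        (P.measurable_G.iterate n (hE.inter measurableSet_Ico))]
      exact measure_mono fun y hy => ⟨⟨hy.1, P.iterate_G_mem hy.2 n⟩, hy.2⟩
  exact ⟨μ, h1, h2, h3⟩

namespace IsACInv

variable {μ : Measure ℝ} (h : P.IsACInv μ)
include h

lemma ac_volume : μ ≪ volume := h.ac.trans Measure.restrict_le_self.absolutelyContinuous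

lemma compl_eq_zero : μ (Set.Ico P.A P.B)ᶜ = 0 :=
  h.ac (by rw [Measure.restrict_apply measurableSet_Ico.compl]; simp)

lemma ae_mem : ∀ᵐ y ∂μ, y ∈ Set.Ico P.A P.B := h.compl_eq_zero

/-- There is a set `H` on which `μ` and Lebesgue measure have the same null sets and which carries
`μ`: the set where the density of `μ` does not vanish. It is essentially forward invariant. -/
lemma exists_core : ∃ H : Set ℝ, MeasurableSet H ∧ H ⊆ Set.Ico P.A P.B ∧ μ Hᶜ = 0 ∧
    volume (H \ P.G ⁻¹' H) = 0 ∧ ∀ S ⊆ H, μ S = 0 → volume S = 0 := by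
  have := h.prob
  have hden := Measure.withDensity_rnDeriv_eq μ volume h.ac_volume
  have hmf := Measure.measurable_rnDeriv μ (volume : Measure ℝ)
  set f := μ.rnDeriv volume
  have hz : ∀ S, μ S = 0 ↔ volume ({x | f x ≠ 0} ∩ S) = 0 := fun S => by
    rw [← withDensity_apply_eq_zero hmf, hden]
  have hH : MeasurableSet ({x | f x ≠ 0} ∩ Set.Ico P.A P.B) :=
    ((measurableSet_eq_fun hmf measurable_const).compl).inter measurableSet_Ico
  have hcompl : μ ({x | f x ≠ 0} ∩ Set.Ico P.A P.B)ᶜ = 0 := by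
    rw [Set.compl_inter]
    refine measure_union_null ?_ h.compl_eq_zero
    rw [hz, Set.inter_compl_self, measure_empty]
  have hnull : ∀ S ⊆ {x | f x ≠ 0} ∩ Set.Ico P.A P.B, μ S = 0 → volume S = 0 := by
    intro S hS h0
    rw [hz] at h0
    rwa [Set.inter_eq_right.2 (hS.trans Set.inter_subset_left)] at h0
  refine ⟨_, hH, Set.inter_subset_right, hcompl, hnull _ Set.sdiff_subset ?_, hnull⟩
  refine measure_mono_null (t := P.G ⁻¹' ({x | f x ≠ 0} ∩ Set.Ico P.A P.B)ᶜ)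
    (fun y hy => hy.2) ?_
  rw [h.mp.measure_preimage hH.compl.nullMeasurableSet, hcompl]

/-- Version of `exists_nhds_γ` for sets that are forward invariant modulo `μ`. -/
lemma exists_nhds {H E : Set ℝ} (hH : MeasurableSet H) (hHs : H ⊆ Set.Ico P.A P.B)
    (hHc : μ Hᶜ = 0) (hH0 : ∀ S ⊆ H, μ S = 0 → volume S = 0) (hE : MeasurableSet E)
    (hpos : μ E ≠ 0) (hinv : μ (E \ P.G ⁻¹' E) = 0) :
    ∃ l r, P.A ≤ l ∧ l < P.γ ∧ P.γ < r ∧ r ≤ P.B ∧ volume (Set.Ico l r \ (E ∩ H)) = 0 := by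
  refine exists_nhds_γ (hE.inter hH) (Set.inter_subset_right.trans hHs) (fun h0 => hpos ?_) ?_
  · refine measure_mono_null (fun y hy => ?_) (measure_union_null (h.ac_volume h0) hHc)
    by_cases hyH : y ∈ H
    · exact Or.inl ⟨hy, hyH⟩
    · exact Or.inr hyH
  · refine hH0 _ (fun y hy => hy.1.2) ?_
    have h1 : μ (P.G ⁻¹' Hᶜ) = 0 := by
      rw [h.mp.measure_preimage hH.compl.nullMeasurableSet, hHc]
    refine measure_mono_null (fun y hy => ?_) (measure_union_null hinv h1)
    by_cases hyH : P.G y ∈ H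
    · exact Or.inl ⟨hy.1.1, fun hyE => hy.2 ⟨hyE, hyH⟩⟩
    · exact Or.inr hyH

/-- An absolutely continuous invariant measure of `G` is ergodic: an invariant set and its complement
cannot both contain a neighbourhood of `γ` up to null sets. -/
lemma ergodic : Ergodic P.G μ := by
  refine { h.mp with aeconst_set := fun s hs hinv => ?_ }
  obtain ⟨H, hH, hHs, hHc, -, hH0⟩ := h.exists_core
  by_cases h1 : μ s = 0
  · rw [eventuallyConst_set']
    exact Or.inl (ae_eq_empty.2 h1)
  by_cases h2 : μ sᶜ = 0
  · rw [eventuallyConst_set']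
    exact Or.inr (ae_eq_univ.2 h2)
  exfalso
  obtain ⟨l, r, -, hl, hr, -, h3⟩ := h.exists_nhds hH hHs hHc hH0 hs h1 (by simp [hinv])
  obtain ⟨l', r', -, hl', hr', -, h4⟩ := h.exists_nhds hH hHs hHc hH0 hs.compl h2
    (by rw [Set.preimage_compl]; simp [hinv])
  have h5 : volume (Set.Ico (max l l') (min r r')) = 0 := by
    refine measure_mono_null (fun y hy => ?_) (measure_union_null h3 h4)
    have hy1 : y ∈ Set.Ico l r :=
      ⟨(le_max_left _ _).trans hy.1, hy.2.trans_le (min_le_left _ _)⟩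
    have hy2 : y ∈ Set.Ico l' r' :=
      ⟨(le_max_right _ _).trans hy.1, hy.2.trans_le (min_le_right _ _)⟩
    by_cases hys : y ∈ s
    · exact Or.inr ⟨hy2, fun h => h.1 hys⟩
    · exact Or.inl ⟨hy1, fun h => hys h.1⟩
  rw [Real.volume_Ico, ENNReal.ofReal_eq_zero] at h5
  have : max l l' < min r r' := max_lt (lt_min (hl.trans hr) (hl.trans hr'))
    (lt_min (hl'.trans hr) (hl'.trans hr'))
  linarith

omit h in
lemma volume_diff_of_forall {H S : Set ℝ}
    (hS : ∀ ε > 0, ∃ T, volume (T \ H) = 0 ∧ volume (S \ T) ≤ ENNReal.ofReal ε) :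
    volume (S \ H) = 0 := by
  refine nonpos_iff_eq_zero.1 (ENNReal.le_of_forall_pos_le_add fun ε hε _ => ?_)
  obtain ⟨T, h1, h2⟩ := hS ε hε
  rw [zero_add]
  refine (measure_mono (t := (S \ T) ∪ (T \ H)) fun y hy => ?_).trans
    ((measure_union_le _ _).trans ?_)
  · by_cases hyT : y ∈ T
    · exact Or.inr ⟨hyT, hy.2⟩
    · exact Or.inl ⟨hy.1, hyT⟩
  · rw [h1, add_zero]
    simpa using h2

/-- Among the intervals around `γ` contained in `H` up to a null set there is a largest one. -/
lemma exists_maximal {H : Set ℝ} (hH : MeasurableSet H) (hHs : H ⊆ Set.Ico P.A P.B)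
    (hHc : μ Hᶜ = 0) (hH0 : ∀ S ⊆ H, μ S = 0 → volume S = 0) :
    ∃ l r, P.A ≤ l ∧ l < P.γ ∧ P.γ < r ∧ r ≤ P.B ∧ volume (Set.Ico l r \ H) = 0 ∧
      ∀ p q, P.A ≤ p → p < P.γ → P.γ < q → q ≤ P.B → volume (Set.Ico p q \ H) = 0 →
        l ≤ p ∧ q ≤ r := by
  have := h.prob
  obtain ⟨l₁, r₁, hl₁, hl₁', hr₁, hr₁', hv₁⟩ := h.exists_nhds hH hHs hHc hH0 .univ (by simp)
    (by simp)
  rw [Set.univ_inter] at hv₁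
  set SL : Set ℝ := {p | P.A ≤ p ∧ p < P.γ ∧ volume (Set.Ico p P.γ \ H) = 0} with hSL
  set SR : Set ℝ := {q | P.γ < q ∧ q ≤ P.B ∧ volume (Set.Ico P.γ q \ H) = 0} with hSR
  have hSLb : BddBelow SL := ⟨P.A, fun p hp => hp.1⟩
  have hSRb : BddAbove SR := ⟨P.B, fun q hq => hq.2.1⟩
  have hmem : ∀ p q, P.A ≤ p → p < P.γ → P.γ < q → q ≤ P.B → volume (Set.Ico p q \ H) = 0 →
      p ∈ SL ∧ q ∈ SR := fun p q h1 h2 h3 h4 h5 =>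
    ⟨⟨h1, h2, measure_mono_null (Set.sdiff_subset_sdiff_left (Set.Ico_subset_Ico_right h3.le)) h5⟩,
      ⟨h3, h4, measure_mono_null (Set.sdiff_subset_sdiff_left (Set.Ico_subset_Ico_left h2.le)) h5⟩⟩
  obtain ⟨hl₁S, hr₁S⟩ := hmem _ _ hl₁ hl₁' hr₁ hr₁' hv₁
  have hvL : volume (Set.Ico (sInf SL) P.γ \ H) = 0 := by
    refine volume_diff_of_forall fun ε hε => ?_
    obtain ⟨p, hp, hpε⟩ := exists_lt_of_csInf_lt ⟨_, hl₁S⟩ (lt_add_of_pos_right (sInf SL) hε)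
    refine ⟨_, hp.2.2, (measure_mono (t := Set.Ico (sInf SL) p) fun y hy => ⟨hy.1.1, ?_⟩).trans ?_⟩
    · by_contra hc
      exact hy.2 ⟨not_lt.1 hc, hy.1.2⟩
    · rw [Real.volume_Ico]
      exact ENNReal.ofReal_le_ofReal (by linarith)
  have hvR : volume (Set.Ico P.γ (sSup SR) \ H) = 0 := by
    refine volume_diff_of_forall fun ε hε => ?_
    obtain ⟨q, hq, hqε⟩ := exists_lt_of_lt_csSup ⟨_, hr₁S⟩ (sub_lt_self (sSup SR) hε)
    refine ⟨_, hq.2.2, (measure_mono (t := Set.Ico q (sSup SR)) fun y hy => ⟨?_, hy.1.2⟩).trans ?_⟩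
    · by_contra hc
      exact hy.2 ⟨hy.1.1, not_le.1 hc⟩
    · rw [Real.volume_Ico]
      exact ENNReal.ofReal_le_ofReal (by linarith)
  refine ⟨sInf SL, sSup SR, le_csInf ⟨_, hl₁S⟩ fun p hp => hp.1,
    (csInf_le hSLb hl₁S).trans_lt hl₁', hr₁.trans_le (le_csSup hSRb hr₁S),
    csSup_le ⟨_, hr₁S⟩ fun q hq => hq.2.1, ?_, fun p q h1 h2 h3 h4 h5 => ?_⟩
  · refine measure_mono_null (fun y hy => ?_) (measure_union_null hvL hvR)
    by_cases hyγ : y < P.γ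
    · exact Or.inl ⟨⟨hy.1.1, hyγ⟩, hy.2⟩
    · exact Or.inr ⟨⟨not_lt.1 hyγ, hy.1.2⟩, hy.2⟩
  · obtain ⟨h6, h7⟩ := hmem p q h1 h2 h3 h4 h5
    exact ⟨csInf_le hSLb h6, le_csSup hSRb h7⟩

/-- An absolutely continuous invariant measure is carried by finitely many intervals in which every
nonempty relatively open set has positive measure, and these intervals reach both `A` and `B`.

Let `[l, r)` be the largest interval around `γ` in the core `H`. Its halves `[l, γ)` and `[γ, r)`
travel affinely until they cover `γ` again, at which time they lie in `[l, r)` by maximality. The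
finitely many intervals visited so far thus form a forward invariant set, which has full measure by
ergodicity. As `G γ = A` and `G (γ-) = B`, the ends `A` and `B` are attained. -/
lemma exists_intervals : ∃ (ι : Type) (_ : Fintype ι) (e f : ι → ℝ),
    (∀ i, P.A ≤ e i ∧ e i < f i ∧ f i ≤ P.B) ∧
    (∀ i V, IsOpen V → (V ∩ Set.Ico (e i) (f i)).Nonempty → μ V ≠ 0) ∧
    μ (⋃ i, Set.Ico (e i) (f i))ᶜ = 0 ∧ (∃ i, e i = P.A) ∧ ∃ i, f i = P.B := by
  have := h.prob
  obtain ⟨H, hH, hHs, hHc, hHinv, hH0⟩ := h.exists_core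
  obtain ⟨l, r, hAl, hlγ, hγr, hrB, hv, hmax⟩ := h.exists_maximal hH hHs hHc hH0
  have hγB := P.γ_lt_B
  have hAγ := P.A_lt_γ
  have hvl : volume (Set.Ico l P.γ \ H) = 0 := measure_mono_null
    (Set.sdiff_subset_sdiff_left (Set.Ico_subset_Ico_right hγr.le)) hv
  have hvr : volume (Set.Ico P.γ r \ H) = 0 := measure_mono_null
    (Set.sdiff_subset_sdiff_left (Set.Ico_subset_Ico_left hlγ.le)) hv
  obtain ⟨m, hm, hmγ⟩ := Uncut.exists_first hAl hlγ hγB.le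
  obtain ⟨n, hn, hnγ⟩ := Uncut.exists_first hAγ.le hγr hrB
  have hm0 : 0 < m := Nat.pos_of_ne_zero fun h0 => by subst h0; simp [D] at hmγ
  have hn0 : 0 < n := Nat.pos_of_ne_zero fun h0 => by subst h0; simp [D] at hnγ
  have hit := null_iterate hH hHs hHinv
  have hlmem : l ∈ Set.Ico P.A P.B := ⟨hAl, by linarith⟩
  have hγmem : P.γ ∈ Set.Ico P.A P.B := ⟨hAγ.le, hγB⟩
  obtain ⟨hm1, hm2⟩ := hmax _ _ (P.iterate_G_mem hlmem m).1 hmγ.1 hmγ.2 (hm.end_le hγB.le)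
    (hm.null_image hH hvl (hit m))
  obtain ⟨hn1, hn2⟩ := hmax _ _ (P.iterate_G_mem hγmem n).1 hnγ.1 hnγ.2 (hn.end_le hrB)
    (hn.null_image hH hvr (hit n))
  -- the intervals visited by the two halves of the maximal interval around `γ`
  set e : Fin m ⊕ Fin n → ℝ := Sum.elim (fun k => P.G^[k] l) (fun k => P.G^[k] P.γ) with he
  set f : Fin m ⊕ Fin n → ℝ := Sum.elim (fun k => P.G^[k] l + P.D k l * (P.γ - l))
    (fun k => P.G^[k] P.γ + P.D k P.γ * (r - P.γ)) with hf
  have hef : ∀ i, P.A ≤ e i ∧ e i < f i ∧ f i ≤ P.B := by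
    rintro (k | k)
    · exact ⟨(P.iterate_G_mem hlmem k).1,
        lt_add_of_pos_right _ (mul_pos (P.D_pos _ _) (sub_pos.2 hlγ)),
        (hm.mono k.2.le).end_le hγB.le⟩
    · exact ⟨(P.iterate_G_mem hγmem k).1,
        lt_add_of_pos_right _ (mul_pos (P.D_pos _ _) (sub_pos.2 hγr)),
        (hn.mono k.2.le).end_le hrB⟩
  have hnull : ∀ i, volume (Set.Ico (e i) (f i) \ H) = 0 := by
    rintro (k | k)
    · exact (hm.mono k.2.le).null_image hH hvl (hit k)
    · exact (hn.mono k.2.le).null_image hH hvr (hit k)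
  have hpos : ∀ i V, IsOpen V → (V ∩ Set.Ico (e i) (f i)).Nonempty → μ V ≠ 0 := by
    rintro i V hV ⟨x, hxV, hx⟩ h0
    have hne : (V ∩ Set.Ioo (e i) (f i)).Nonempty := by
      have hxc : x ∈ closure (Set.Ioo (e i) (f i)) := by
        rw [closure_Ioo (hef i).2.1.ne]
        exact Set.Ico_subset_Icc_self hx
      exact mem_closure_iff.1 hxc V hV hxV
    refine ((hV.inter isOpen_Ioo).measure_pos volume hne).ne' ?_
    refine measure_mono_null (t := (V ∩ H) ∪ (Set.Ico (e i) (f i) \ H)) (fun y hy => ?_)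
      (measure_union_null (hH0 _ Set.inter_subset_right
        (measure_mono_null Set.inter_subset_left h0)) (hnull i))
    by_cases hyH : y ∈ H
    · exact Or.inl ⟨hy.1, hyH⟩
    · exact Or.inr ⟨Set.Ioo_subset_Ico_self hy.2, hyH⟩
  have hel : e (Sum.inl ⟨0, hm0⟩) = l := rfl
  have hfl : f (Sum.inl ⟨0, hm0⟩) = P.γ := by simp [hf, D]
  have her : e (Sum.inr ⟨0, hn0⟩) = P.γ := rfl
  have hfr : f (Sum.inr ⟨0, hn0⟩) = r := by simp [hf, D]
  have hbase : Set.Ico l r ⊆ ⋃ i, Set.Ico (e i) (f i) := by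
    intro y hy
    rw [Set.mem_iUnion]
    by_cases hyγ : y < P.γ
    · exact ⟨Sum.inl ⟨0, hm0⟩, by rw [hel, hfl]; exact ⟨hy.1, hyγ⟩⟩
    · exact ⟨Sum.inr ⟨0, hn0⟩, by rw [her, hfr]; exact ⟨not_lt.1 hyγ, hy.2⟩⟩
  have hstep : ∀ {k N : ℕ} {p q y : ℝ}, P.Uncut N p q → k < N →
      y ∈ Set.Ico (P.G^[k] p) (P.G^[k] p + P.D k p * (q - p)) →
      P.G y ∈ Set.Ico (P.G^[k + 1] p) (P.G^[k + 1] p + P.D (k + 1) p * (q - p)) := by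
    intro k N p q y hU hk hy
    rw [P.G_affine (hU k hk) hy, Function.iterate_succ_apply', D]
    have := P.sl_pos (P.G^[k] p)
    exact ⟨by nlinarith [hy.1], by nlinarith [hy.2]⟩
  have hO : (⋃ i, Set.Ico (e i) (f i)) ⊆ P.G ⁻¹' ⋃ i, Set.Ico (e i) (f i) := by
    intro y hy
    rw [Set.mem_iUnion] at hy
    obtain ⟨k | k, hy⟩ := hy
    · have h1 := hstep hm k.2 hy
      by_cases hk : (k : ℕ) + 1 < m
      · exact Set.mem_iUnion.2 ⟨Sum.inl ⟨k + 1, hk⟩, h1⟩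
      · have hkm : (k : ℕ) + 1 = m := by omega
        rw [hkm] at h1
        exact hbase (Set.Ico_subset_Ico hm1 hm2 h1)
    · have h1 := hstep hn k.2 hy
      by_cases hk : (k : ℕ) + 1 < n
      · exact Set.mem_iUnion.2 ⟨Sum.inr ⟨k + 1, hk⟩, h1⟩
      · have hkn : (k : ℕ) + 1 = n := by omega
        rw [hkn] at h1
        exact hbase (Set.Ico_subset_Ico hn1 hn2 h1)
  have hOm : MeasurableSet (⋃ i, Set.Ico (e i) (f i)) := .iUnion fun _ => measurableSet_Ico
  refine ⟨_, inferInstance, e, f, hef, hpos, ?_, ?_, ?_⟩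
  · rcases h.ergodic.ae_empty_or_univ_of_ae_le_preimage hOm.nullMeasurableSet
      hO.eventuallyLE with h0 | h0
    · exfalso
      rw [ae_eq_empty] at h0
      refine hpos (Sum.inl ⟨0, hm0⟩) (Set.Ioo l P.γ) isOpen_Ioo ?_
        (measure_mono_null (Set.Ioo_subset_Ico_self.trans
          ((Set.Ico_subset_Ico_right hγr.le).trans hbase)) h0)
      rw [hel, hfl]
      obtain ⟨y, hy⟩ := Set.nonempty_Ioo.2 hlγ
      exact ⟨y, hy, Set.Ioo_subset_Ico_self hy⟩
    · exact ae_eq_univ.1 h0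
  -- If `[γ, r)` returns to `γ` after one step, then `A = G γ` already lies in `[l, r)`.
  · have hGγ : P.G P.γ = P.A := by simp [G, A]
    by_cases hn1' : 1 < n
    · exact ⟨Sum.inr ⟨1, hn1'⟩, hGγ⟩
    · have : n = 1 := by omega
      subst this
      refine ⟨Sum.inl ⟨0, hm0⟩, ?_⟩
      rw [hel]
      rw [Function.iterate_one, hGγ] at hn1
      exact le_antisymm hn1 hAl
  -- Likewise for `B`, the right end of the image of `[l, γ)`.
  · have hGl : P.G^[1] l + P.D 1 l * (P.γ - l) = P.B := by
      have h1 : P.D 1 l = P.sl l := by simp [D]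
      rw [h1, Function.iterate_one, sl, G, B, if_pos hlγ, if_pos hlγ]
      ring
    by_cases hm1' : 1 < m
    · exact ⟨Sum.inl ⟨1, hm1'⟩, hGl⟩
    · have : m = 1 := by omega
      subst this
      refine ⟨Sum.inr ⟨0, hn0⟩, ?_⟩
      rw [hfr]
      rw [hGl] at hm2
      exact le_antisymm hrB hm2

end IsACInv

end Param

/-! ### Coding, Lyapunov exponent and transfer to the half-line -/

namespace Param

variable {P : Param}

/-- The maps `T₀` and `T₁` on the real line; on `[0, ∞)` they agree with `Tmap`. -/
noncomputable def T (P : Param) (i : Bool) (x : ℝ) : ℝ := if i then P.b * x + 1 else P.a * x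

/-- The letter of the branch of `G` at `y`: `false` on the left of `γ` and `true` from `γ` on. -/
noncomputable def code (P : Param) (y : ℝ) : Bool := decide (P.γ ≤ y)

lemma measurable_T (i : Bool) : Measurable (P.T i) := by
  unfold T; split_ifs <;> fun_prop

lemma measurable_code : Measurable P.code := by
  refine measurable_to_bool ?_
  have : P.code ⁻¹' {true} = Set.Ici P.γ := by ext y; simp [code]
  rw [this]
  exact measurableSet_Ici

lemma T_code_G (y : ℝ) : P.T (P.code y) (P.G y) = y := by
  have ha := P.ha.ne'; have hb := P.hb0.ne'
  by_cases hy : P.γ ≤ y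
  · simp only [T, code, G, decide_eq_true hy, if_true, if_neg (not_lt.2 hy)]
    field_simp; ring
  · simp only [T, code, G, decide_eq_false hy, if_pos (not_le.1 hy)]
    simp; field_simp

lemma skewMap_ofReal (ω : ℕ → Bool) {x : ℝ} (hx : 0 ≤ x) :
    skewMap P.a P.b (ω, ENNReal.ofReal x) = (shiftMap ω, ENNReal.ofReal (P.T (ω 0) x)) := by
  have ha := P.ha.le; have hb := P.hb0.le
  unfold skewMap Tmap T
  simp only
  split_ifs
  · rw [ENNReal.ofReal_add (by positivity) zero_le_one, ENNReal.ofReal_mul hb, ENNReal.ofReal_one]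
  · rw [ENNReal.ofReal_mul ha]

lemma measurable_skewMap (a b : ℝ) : Measurable (skewMap a b) := by
  have h0 : Measurable fun z : (ℕ → Bool) × ℝ≥0∞ => z.1 0 := by fun_prop
  refine (measurable_shiftMap.comp measurable_fst).prodMk ?_
  unfold Tmap
  refine Measurable.ite (h0 (measurableSet_singleton true)) ?_ ?_ <;> fun_prop

namespace IsACInv

variable {μ : Measure ℝ} (h : P.IsACInv μ)
include h

lemma measure_Ici_pos : 0 < μ.real (Set.Ici P.γ) := by
  have := h.prob
  obtain ⟨ι, _, e, f, hef, hpos, -, -, i, hi⟩ := h.exists_intervals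
  refine ENNReal.toReal_pos (fun h0 => hpos i (Set.Ioi P.γ) isOpen_Ioi ?_
    (measure_mono_null Set.Ioi_subset_Ici_self h0)) (measure_ne_top _ _)
  obtain ⟨y, hy1, hy2⟩ := exists_between (max_lt P.γ_lt_B (hi ▸ (hef i).2.1))
  rw [max_lt_iff] at hy1
  exact ⟨y, hy1.1, hy1.2.le, hi ▸ hy2⟩

/-- Negativity of the Lyapunov exponent. As `μ` is invariant, `log ∘ G` and `log` have the same
integral; since `log (G y) = log y - log a` on the left of `γ` and
`log (G y) = log y + log (1 - 1 / y) - log b` on the right, the exponent is the integral of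
`log (1 - 1 / y) ≤ -1 / B` over `[γ, B)`. -/
lemma integral_neg :
    μ.real (Set.Iio P.γ) * Real.log P.a + μ.real (Set.Ici P.γ) * Real.log P.b < 0 := by
  have := h.prob
  have hA := P.A_pos
  have hB : 0 < P.B := by linarith [P.one_lt_B]
  have hlog : Integrable (fun y => Real.log y) μ := by
    refine Integrable.of_mem_Icc (Real.log P.A) (Real.log P.B) Real.measurable_log.aemeasurable ?_
    filter_upwards [h.ae_mem] with y hy
    exact ⟨Real.log_le_log hA hy.1, Real.log_le_log (hA.trans_le hy.1) hy.2.le⟩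
  have hlogG : Integrable (fun y => Real.log (P.G y)) μ := h.mp.integrable_comp_of_integrable hlog
  have heq : ∫ y, Real.log (P.G y) ∂μ = ∫ y, Real.log y ∂μ := by
    conv_rhs => rw [← h.mp.map_eq]
    rw [integral_map P.measurable_G.aemeasurable Real.measurable_log.aestronglyMeasurable]
  have hi1 : Integrable ((Set.Iio P.γ).indicator fun _ => Real.log P.a) μ :=
    (integrable_const _).indicator measurableSet_Iio
  have hi2 : Integrable ((Set.Ici P.γ).indicator fun _ => Real.log P.b + 1 / P.B) μ :=
    (integrable_const _).indicator measurableSet_Ici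
  have hle : ∫ y, (Real.log (P.G y) + (Set.Iio P.γ).indicator (fun _ => Real.log P.a) y +
      (Set.Ici P.γ).indicator (fun _ => Real.log P.b + 1 / P.B) y) ∂μ ≤ ∫ y, Real.log y ∂μ := by
    refine integral_mono_ae ((hlogG.add hi1).add hi2) hlog ?_
    filter_upwards [h.ae_mem] with y hy
    have hy0 : 0 < y := hA.trans_le hy.1
    by_cases hyγ : y < P.γ
    · have h1 : y ∉ Set.Ici P.γ := not_le.2 hyγ
      rw [Set.indicator_of_mem (show y ∈ Set.Iio P.γ from hyγ), Set.indicator_of_notMem h1, G,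
        if_pos hyγ, Real.log_div hy0.ne' P.ha.ne']
      linarith
    · have h1 : y ∈ Set.Ici P.γ := not_lt.1 hyγ
      have hy1 : 0 < y - 1 := by linarith [P.hγ, Set.mem_Ici.1 h1]
      rw [Set.indicator_of_notMem (show y ∉ Set.Iio P.γ from hyγ), Set.indicator_of_mem h1, G,
        if_neg hyγ, Real.log_div hy1.ne' P.hb0.ne']
      have h2 := Real.log_le_sub_one_of_pos (div_pos hy1 hy0)
      rw [Real.log_div hy1.ne' hy0.ne'] at h2
      have h3 : (y - 1) / y - 1 = - (1 / y) := by field_simp; ring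
      have h4 := one_div_le_one_div_of_le hy0 hy.2.le
      linarith
  have hsplit := integral_add (hlogG.add hi1) hi2
  simp only [Pi.add_apply] at hsplit
  rw [hsplit, integral_add hlogG hi1, heq,
    integral_indicator_const _ measurableSet_Iio, integral_indicator_const _ measurableSet_Ici,
    smul_eq_mul, smul_eq_mul, mul_add] at hle
  have := mul_pos h.measure_Ici_pos (one_div_pos.2 hB)
  linarith

/-- The natural extension of `G` with respect to `μ`, as a measure on `Σ × ℝ`, with its ergodic
symbolic factor of negative Lyapunov exponent. -/
lemma exists_code_measure : ∃ κ : Measure ((ℕ → Bool) × ℝ), IsProbabilityMeasure κ ∧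
    MeasurePreserving (skewReal P.T) κ κ ∧ κ.map Prod.snd = μ ∧
    Ergodic shiftMap (κ.map Prod.fst) ∧ lyap P.a P.b (κ.map Prod.fst) < 0 := by
  have := h.prob
  obtain ⟨κ, hκp, hκ, hκs, hlaw⟩ := exists_natural_extension μ h.mp measurable_code measurable_T
    (ae_of_all _ T_code_G)
  have h0 : Measurable fun z : (ℕ → Bool) × ℝ => z.1 0 := by fun_prop
  have hpair : Measurable fun z : (ℕ → Bool) × ℝ => (z.2, z.1 0) := measurable_snd.prodMk h0
  have hpair' : Measurable fun y => (P.G y, P.code y) := P.measurable_G.prodMk measurable_code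
  have hTm : Measurable fun p : ℝ × Bool => P.T p.2 p.1 :=
    measurable_from_prod_countable_left fun i => measurable_T i
  refine ⟨κ, hκp, hκ, hκs, ?_, ?_⟩
  · refine ergodic_shift_of_extension (G := P.G) (c := P.code) measurable_code hκ ?_
      (by rw [hκs]; exact h.ergodic)
    have hmeas : MeasurableSet
        {p : ℝ × Bool | P.G (P.T p.2 p.1) = p.1 ∧ P.code (P.T p.2 p.1) = p.2} :=
      (measurableSet_eq_fun (P.measurable_G.comp hTm) measurable_fst).inter
        (measurableSet_eq_fun (measurable_code.comp hTm) measurable_snd)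
    have h1 : ∀ᵐ p ∂(κ.map fun z => (z.2, z.1 0)),
        P.G (P.T p.2 p.1) = p.1 ∧ P.code (P.T p.2 p.1) = p.2 := by
      rw [hlaw, ae_map_iff hpair'.aemeasurable hmeas]
      exact ae_of_all _ fun y => by simp only [T_code_G, and_self]
    rw [ae_map_iff hpair.aemeasurable hmeas] at h1
    exact h1
  · have hν : ∀ i : Bool, (κ.map Prod.fst) {ω | ω 0 = i} = μ {y | P.code y = i} := by
      intro i
      have hm1 : MeasurableSet {ω : ℕ → Bool | ω 0 = i} :=
        measurableSet_eq_fun (measurable_pi_apply 0) measurable_const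
      have hm2 : MeasurableSet {p : ℝ × Bool | p.2 = i} :=
        measurable_snd (measurableSet_singleton i)
      have := congrArg (fun m : Measure (ℝ × Bool) => m {p | p.2 = i}) hlaw
      rw [Measure.map_apply hpair hm2, Measure.map_apply hpair' hm2] at this
      rw [Measure.map_apply measurable_fst hm1]
      exact this
    have hf : {y | P.code y = false} = Set.Iio P.γ := by ext y; simp [code]
    have ht : {y | P.code y = true} = Set.Ici P.γ := by ext y; simp [code]
    rw [lyap, hν, hν, hf, ht]
    exact h.integral_neg

omit h in
/-- The support of the image of `μ` in `[0, ∞]`, if `μ` is carried by intervals in which relatively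
open sets have positive measure. -/
lemma support_eq {ι : Type} [Fintype ι] {e f : ι → ℝ}
    (hef : ∀ i, P.A ≤ e i ∧ e i < f i ∧ f i ≤ P.B)
    (hpos : ∀ i V, IsOpen V → (V ∩ Set.Ico (e i) (f i)).Nonempty → μ V ≠ 0)
    (hnull : μ (⋃ i, Set.Ico (e i) (f i))ᶜ = 0) :
    {x : ℝ≥0∞ | ∀ U : Set ℝ≥0∞, IsOpen U → x ∈ U → 0 < (μ.map ENNReal.ofReal) U} =
      ⋃ i, Set.Icc (ENNReal.ofReal (e i)) (ENNReal.ofReal (f i)) := by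
  have hA := P.A_pos
  ext x
  simp only [Set.mem_ofPred_eq]
  constructor
  · intro hx
    by_contra hxU
    have hcl : IsClosed (⋃ i, Set.Icc (ENNReal.ofReal (e i)) (ENNReal.ofReal (f i))) :=
      isClosed_iUnion_of_finite fun i => isClosed_Icc
    have h1 := hx _ hcl.isOpen_compl hxU
    rw [Measure.map_apply ENNReal.measurable_ofReal hcl.isOpen_compl.measurableSet] at h1
    refine h1.ne' (measure_mono_null (t := (⋃ i, Set.Ico (e i) (f i))ᶜ)
      (fun y hy hyU => hy ?_) hnull)
    obtain ⟨i, hi⟩ := Set.mem_iUnion.1 hyU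
    exact Set.mem_iUnion.2 ⟨i, ENNReal.ofReal_le_ofReal hi.1, ENNReal.ofReal_le_ofReal hi.2.le⟩
  · intro hx U hU hxU
    obtain ⟨i, hi⟩ := Set.mem_iUnion.1 hx
    obtain ⟨h1, h2, -⟩ := hef i
    have hxt : x ≠ ⊤ := (hi.2.trans_lt ENNReal.ofReal_lt_top).ne
    rw [Measure.map_apply ENNReal.measurable_ofReal hU.measurableSet, pos_iff_ne_zero]
    have hV : IsOpen (ENNReal.ofReal ⁻¹' U) := hU.preimage ENNReal.continuous_ofReal
    refine hpos i _ hV ?_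
    have hxI : x.toReal ∈ closure (Set.Ico (e i) (f i)) := by
      rw [closure_Ico h2.ne]
      refine ⟨(ENNReal.ofReal_le_iff_le_toReal hxt).1 hi.1, ENNReal.toReal_le_of_le_ofReal ?_ hi.2⟩
      linarith
    refine mem_closure_iff.1 hxI _ hV ?_
    rw [Set.mem_preimage, ENNReal.ofReal_toReal hxt]
    exact hxU

end IsACInv

variable (P) in
/-- The measures asserted by the theorem, for a single value of `γ`. -/
lemma exists_measures : ∃ (ν : Measure (ℕ → Bool)) (μ : Measure ℝ≥0∞),
    IsProbabilityMeasure ν ∧ Ergodic shiftMap ν ∧ lyap P.a P.b ν < 0 ∧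
    IsInvariantFor P.a P.b ν μ ∧
    μ ≪ Measure.map ENNReal.ofReal (volume : Measure ℝ) ∧
    ∃ (k : ℕ) (e f : Fin k → ℝ≥0∞), 0 < k ∧ (∀ i, e i ≤ f i) ∧
      {x : ℝ≥0∞ | ∀ U : Set ℝ≥0∞, IsOpen U → x ∈ U → 0 < μ U} = ⋃ i, Set.Icc (e i) (f i) ∧
      (⨅ i, e i) = ENNReal.ofReal P.A ∧ (⨆ i, f i) = ENNReal.ofReal P.B := by
  obtain ⟨μ, h⟩ := P.exists_isACInv
  have := h.prob
  obtain ⟨κ, hκp, hκ, hκs, herg, hlyap⟩ := h.exists_code_measure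
  have hφ : Measurable fun z : (ℕ → Bool) × ℝ => (z.1, ENNReal.ofReal z.2) := by fun_prop
  refine ⟨κ.map Prod.fst, μ.map ENNReal.ofReal,
    Measure.isProbabilityMeasure_map measurable_fst.aemeasurable, herg, hlyap,
    ⟨Measure.isProbabilityMeasure_map ENNReal.measurable_ofReal.aemeasurable, ?_,
      κ.map fun z => (z.1, ENNReal.ofReal z.2),
      Measure.isProbabilityMeasure_map hφ.aemeasurable, ⟨measurable_skewMap _ _, ?_⟩, ?_, ?_⟩,
    h.ac_volume.map ENNReal.measurable_ofReal, ?_⟩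
  · rw [Measure.map_apply ENNReal.measurable_ofReal (measurableSet_singleton _)]
    convert measure_empty (μ := μ)
    ext y; simp
  · have hae : ∀ᵐ z ∂κ, z.2 ∈ Set.Ico P.A P.B := by
      have h1 := h.ae_mem
      rw [← hκs] at h1
      exact ae_of_ae_map measurable_snd.aemeasurable h1
    rw [Measure.map_map (measurable_skewMap _ _) hφ]
    conv_rhs => rw [← hκ.map_eq]
    rw [Measure.map_map hφ hκ.measurable]
    refine Measure.map_congr ?_
    filter_upwards [hae] with z hz
    exact skewMap_ofReal z.1 (P.A_pos.le.trans hz.1)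
  · rw [Measure.map_map measurable_fst hφ]; rfl
  · rw [Measure.map_map measurable_snd hφ, ← hκs,
      Measure.map_map ENNReal.measurable_ofReal measurable_snd]
    rfl
  · obtain ⟨ι, _, e, f, hef, hpos, hnull, ⟨i, hi⟩, j, hj⟩ := h.exists_intervals
    set σ := (Fintype.equivFin ι).symm
    refine ⟨Fintype.card ι, fun k => ENNReal.ofReal (e (σ k)), fun k => ENNReal.ofReal (f (σ k)),
      Fintype.card_pos_iff.2 ⟨i⟩, fun k => ENNReal.ofReal_le_ofReal (hef _).2.1.le, ?_, ?_, ?_⟩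
    · rw [IsACInv.support_eq hef hpos hnull]
      exact (σ.surjective.iUnion_comp
        fun i => Set.Icc (ENNReal.ofReal (e i)) (ENNReal.ofReal (f i))).symm
    · refine le_antisymm (iInf_le_of_le (σ.symm i) ?_) (le_iInf fun k => ?_)
      · simp only [Equiv.apply_symm_apply, hi, le_refl]
      · exact ENNReal.ofReal_le_ofReal (hef _).1
    · refine le_antisymm (iSup_le fun k => ?_) (le_iSup_of_le (σ.symm j) ?_)
      · exact ENNReal.ofReal_le_ofReal (hef _).2.2
      · simp only [Equiv.apply_symm_apply, hj, le_refl]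

end Param

/-- **Theorem G / Theorem 5.6.** For every `γ > 1` there exist an ergodic `σ`-invariant
probability measure `ν_γ` on `Σ` with `λ(ν_γ) < 0` and a probability measure `μ_γ`
invariant for `(T₀, T₁, ν_γ)` such that `μ_γ` is absolutely continuous with respect to
Lebesgue measure (transported to `ℝ̄₊` by `ENNReal.ofReal`) and the support of `μ_γ`
is a union of finitely many intervals whose convex hull equals `[(γ−1)/b, γ/a]`.
In particular `μ_γ ≠ μ_δ` for `γ ≠ δ`, `γ, δ > 1`. -/
theorem abs_cont_invariant_family (a b : ℝ) (ha : 0 < a) (ha1 : a < 1) (hb : 1 < b) :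
    ∃ (ν : ℝ → Measure (ℕ → Bool)) (μ : ℝ → Measure ℝ≥0∞),
      (∀ γ : ℝ, 1 < γ →
        IsProbabilityMeasure (ν γ) ∧ Ergodic shiftMap (ν γ) ∧ lyap a b (ν γ) < 0 ∧
        IsInvariantFor a b (ν γ) (μ γ) ∧
        μ γ ≪ Measure.map ENNReal.ofReal (volume : Measure ℝ) ∧
        ∃ (k : ℕ) (e f : Fin k → ℝ≥0∞), 0 < k ∧ (∀ i, e i ≤ f i) ∧
          {x : ℝ≥0∞ | ∀ U : Set ℝ≥0∞, IsOpen U → x ∈ U → 0 < μ γ U} =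
            ⋃ i, Set.Icc (e i) (f i) ∧
          (⨅ i, e i) = ENNReal.ofReal ((γ - 1) / b) ∧
          (⨆ i, f i) = ENNReal.ofReal (γ / a)) ∧
      ∀ γ δ : ℝ, 1 < γ → 1 < δ → γ ≠ δ → μ γ ≠ μ δ := by
  have key : ∀ γ : ℝ, ∃ (ν : Measure (ℕ → Bool)) (μ : Measure ℝ≥0∞), 1 < γ →
        IsProbabilityMeasure ν ∧ Ergodic shiftMap ν ∧ lyap a b ν < 0 ∧
        IsInvariantFor a b ν μ ∧
        μ ≪ Measure.map ENNReal.ofReal (volume : Measure ℝ) ∧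
        ∃ (k : ℕ) (e f : Fin k → ℝ≥0∞), 0 < k ∧ (∀ i, e i ≤ f i) ∧
          {x : ℝ≥0∞ | ∀ U : Set ℝ≥0∞, IsOpen U → x ∈ U → 0 < μ U} =
            ⋃ i, Set.Icc (e i) (f i) ∧
          (⨅ i, e i) = ENNReal.ofReal ((γ - 1) / b) ∧
          (⨆ i, f i) = ENNReal.ofReal (γ / a) := by
    intro γ
    by_cases hγ : 1 < γ
    · obtain ⟨ν, μ, h⟩ := Param.exists_measures ⟨a, b, γ, ha, ha1, hb, hγ⟩
      exact ⟨ν, μ, fun _ => h⟩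
    -- Nothing is asked for `γ ≤ 1`.
    · exact ⟨0, 0, fun h => absurd h hγ⟩
  choose ν μ h using key
  refine ⟨ν, μ, h, fun γ δ hγ hδ hne heq => hne ?_⟩
  -- The supremum of the support of `μ γ` is `γ / a`, so it determines `γ`.
  obtain ⟨-, -, -, -, -, k, e, f, -, hef, hs, -, hf⟩ := h γ hγ
  obtain ⟨-, -, -, -, -, k', e', f', -, hef', hs', -, hf'⟩ := h δ hδ
  rw [heq, hs'] at hs
  have h1 := congrArg sSup hs
  simp only [sSup_iUnion, csSup_Icc (hef _), csSup_Icc (hef' _)] at h1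
  rw [hf, hf', ENNReal.ofReal_eq_ofReal_iff (by positivity) (by positivity),
    div_left_inj' ha.ne'] at h1
  exact h1.symm
end

section
/- Let 0 < p < 1 and let μ be a Borel probability measure on ℝ̄₊ with μ({∞}) = 0 satisfying the stationarity equation μ(B) = p·μ(T₀⁻¹(B)) + (1−p)·μ(T₁⁻¹(B)) for every Borel set B ⊆ ℝ̄₊. Then every nonempty open interval I ⊆ ℝ₊ has μ(I) > 0; in other words, the support of μ is all of ℝ̄₊. -/
/-!
The support `S` of `μ` is closed, has full measure, and is mapped into itself by `T₀` and `T₁`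
(`Tmap_mem_support`), because both maps are continuous and stationarity gives each preimage a
positive weight. As `μ {∞} = 0`, `S` contains a finite point, so it contains `0 = lim aⁿ x`.
It remains to see that the orbit of `0` under `T₀, T₁` is dense in `[0, ∞)`
(`exists_mem_between`).

By Dirichlet's approximation theorem applied to `log b / log a⁻¹`, there are `n` and `m ≥ 1` with
`l = aⁿ bᵐ` as close to `1` as desired. Then `T₀ⁿ T₁ᵐ` is the map `x ↦ l x + c` with
`c = aⁿ (bᵐ - 1) / (b - 1)`, and `c` lies between two positive constants that depend only on `b`.
On a prescribed bounded interval this map is thus nearly a translation by a step of bounded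
length: the orbit of `0` moves steadily to the right and cannot jump over an interval longer than
the step. Given `0 ≤ u < v`, the interval `(u / aʲ, v / aʲ)` is long enough when `j` is large, so
it meets the orbit, and applying `T₀ʲ` brings the orbit point into `(u, v)`.
-/

open MeasureTheory
open scoped ENNReal

/-- Some `aⁿ bᵐ` with `m ≥ 1` is arbitrarily close to `1`; it may lie on either side of `1`. -/
lemma exists_pow_mul_pow_near_one {a b : ℝ} (ha : 0 < a) (ha1 : a < 1) (hb : 1 < b)
    {ε : ℝ} (hε : 0 < ε) : ∃ n m : ℕ, 0 < m ∧ |a ^ n * b ^ m - 1| ≤ ε := by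
  have hα : 0 < -Real.log a := by linarith [Real.log_neg ha ha1]
  have hβ : 0 < Real.log b := Real.log_pos hb
  set α := -Real.log a with hαdef
  set β := Real.log b with hβdef
  obtain ⟨N, hN⟩ := exists_nat_gt (max (α / min 1 (ε / 2)) 0)
  have hδ : 0 < min 1 (ε / 2) := lt_min one_pos (by linarith)
  have hN0 : 0 < N := by
    have := (le_max_right _ _).trans_lt hN
    exact_mod_cast this
  have hN1 : α / min 1 (ε / 2) < N := (le_max_left _ _).trans_lt hN
  obtain ⟨m, hm0, -, hm⟩ := Real.exists_nat_abs_mul_sub_round_le (β / α) hN0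
  have hr : 0 ≤ round ((m : ℝ) * (β / α)) := by
    rw [round_eq]
    exact Int.floor_nonneg.mpr (by positivity)
  obtain ⟨n, hn⟩ := Int.eq_ofNat_of_zero_le hr
  rw [hn] at hm
  push_cast at hm
  refine ⟨n, m, hm0, ?_⟩
  have hexp : a ^ n * b ^ m = Real.exp (α * (m * (β / α) - n)) := by
    have h1 : α * (m * (β / α) - n) = n * Real.log a + m * Real.log b := by
      rw [mul_sub, mul_left_comm, mul_div_cancel₀ _ hα.ne', hαdef, hβdef]
      ring
    rw [h1, Real.exp_add, Real.exp_nat_mul, Real.exp_nat_mul, Real.exp_log ha,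
      Real.exp_log (by linarith)]
  have hx : |α * (m * (β / α) - n)| ≤ min 1 (ε / 2) := by
    rw [abs_mul, abs_of_pos hα]
    rw [div_lt_iff₀ hδ] at hN1
    calc α * |m * (β / α) - n| ≤ α * (1 / (N + 1)) := by gcongr
      _ ≤ min 1 (ε / 2) := by
        rw [mul_one_div, div_le_iff₀ (by positivity)]
        nlinarith
  rw [hexp]
  have h2 := Real.abs_exp_sub_one_le (hx.trans (min_le_left _ _))
  linarith [hx.trans (min_le_right _ _)]

/-- A set containing `0` and stable under a near-translation `x ↦ l x + c` meets every interval
`(U, V)` that is longer than one step of the map. -/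
lemma exists_mem_of_step {S : Set ℝ} (h0 : (0 : ℝ) ∈ S) {l c d U V : ℝ}
    (hS : ∀ x ∈ S, 0 ≤ x → l * x + c ∈ S) (hU : 0 ≤ U)
    (hl : |l - 1| * U ≤ d) (hd : 2 * d ≤ c) (hc : 0 < c) (hUV : U + c + d < V) :
    ∃ z ∈ S, U < z ∧ z < V := by
  by_contra hcon
  push Not at hcon
  -- An orbit that misses `(U, V)` stays below `U` while growing by at least `c / 2` per step.
  have key : ∀ k : ℕ, ∃ z ∈ S, k * (c / 2) ≤ z ∧ z ≤ U := by
    intro k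
    induction k with
    | zero => exact ⟨0, h0, by simp, hU⟩
    | succ k ih =>
      obtain ⟨z, hz, hkz, hzU⟩ := ih
      have hz0 : 0 ≤ z := le_trans (by positivity) hkz
      have hlz : |(l - 1) * z| ≤ d := by
        rw [abs_mul, abs_of_nonneg hz0]
        exact (mul_le_mul_of_nonneg_left hzU (abs_nonneg _)).trans hl
      obtain ⟨h1, h2⟩ := abs_le.mp hlz
      refine ⟨l * z + c, hS z hz hz0, by push_cast; linarith, ?_⟩
      by_contra hlt
      linarith [hcon _ (hS z hz hz0) (not_le.mp hlt)]
  obtain ⟨k, hk⟩ := exists_nat_gt (U / (c / 2))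
  rw [div_lt_iff₀ (by linarith)] at hk
  obtain ⟨z, -, h1, h2⟩ := key k
  linarith

lemma pow_mul_mem {a : ℝ} (ha : 0 < a) {S : Set ℝ} (hSa : ∀ x ∈ S, 0 ≤ x → a * x ∈ S) (n : ℕ) :
    ∀ x ∈ S, 0 ≤ x → a ^ n * x ∈ S := by
  induction n with
  | zero => intro x hx _; simpa using hx
  | succ n ih =>
    intro x hx h
    rw [pow_succ', mul_assoc]
    exact hSa _ (ih x hx h) (by positivity)

lemma affine_iterate_mem {b : ℝ} (hb : 1 < b) {S : Set ℝ}
    (hSb : ∀ x ∈ S, 0 ≤ x → b * x + 1 ∈ S) (m : ℕ) :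
    ∀ x ∈ S, 0 ≤ x → b ^ m * x + (b ^ m - 1) / (b - 1) ∈ S := by
  have hb1 : b - 1 ≠ 0 := by linarith
  induction m with
  | zero => intro x hx _; simpa using hx
  | succ m ih =>
    intro x hx h
    have hpow : 1 ≤ b ^ m := one_le_pow₀ hb.le
    have h1 : 0 ≤ (b ^ m - 1) / (b - 1) := div_nonneg (by linarith) (by linarith)
    have h2 := hSb _ (ih x hx h) (by positivity)
    convert h2 using 1
    field_simp
    ring

/-- A set of reals containing `0` and stable under `x ↦ a x` and `x ↦ b x + 1` is dense in
`[0, ∞)`. -/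
lemma exists_mem_between {a b : ℝ} (ha : 0 < a) (ha1 : a < 1) (hb : 1 < b) {S : Set ℝ}
    (h0 : (0 : ℝ) ∈ S) (hSa : ∀ x ∈ S, 0 ≤ x → a * x ∈ S)
    (hSb : ∀ x ∈ S, 0 ≤ x → b * x + 1 ∈ S) {u v : ℝ} (hu : 0 ≤ u) (huv : u < v) :
    ∃ z ∈ S, u < z ∧ z < v := by
  have hb1 : 0 < b - 1 := by linarith
  have hb0 : 0 < b := by linarith
  -- `C` bounds the step length `c` from above as soon as `aⁿ bᵐ ≤ 2`.
  set C := 2 / (b - 1) with hC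
  have hC0 : 0 < C := by positivity
  obtain ⟨j, hj⟩ := exists_pow_lt_of_lt_one (show 0 < (v - u) / (C + 1) by
    apply div_pos <;> linarith) ha1
  rw [lt_div_iff₀ (by linarith)] at hj
  have haj : 0 < a ^ j := by positivity
  have hV : 0 < v / a ^ j := div_pos (by linarith) haj
  have hU : 0 ≤ u / a ^ j := by positivity
  have hUV : u / a ^ j + C + 1 < v / a ^ j := by
    rw [lt_div_iff₀ haj, add_mul, add_mul, div_mul_cancel₀ _ haj.ne']
    linarith
  -- `1 / (2 b)` bounds `c` from below as soon as `aⁿ bᵐ ≥ 1 / 2`; hence this choice of `d`.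
  set d := min 1 (1 / (4 * b)) with hd
  have hd0 : 0 < d := lt_min one_pos (by positivity)
  have hε : 0 < min (1 / 2) (d / (v / a ^ j)) := lt_min (by norm_num) (by positivity)
  obtain ⟨n, m, hm, hnm⟩ := exists_pow_mul_pow_near_one ha ha1 hb hε
  have hl1 := abs_le.mp (hnm.trans (min_le_left _ _))
  have hl2 := hnm.trans (min_le_right _ _)
  rw [le_div_iff₀ hV] at hl2
  set l := a ^ n * b ^ m with hl
  set c := a ^ n * ((b ^ m - 1) / (b - 1)) with hc
  have han : 0 < a ^ n := by positivity
  have hbm : b ≤ b ^ m := le_self_pow₀ hb.le hm.ne'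
  have hcC : c ≤ C := by
    rw [hc, hC, ← mul_div_assoc]
    gcongr
    nlinarith
  have hcb : 1 / (2 * b) ≤ c := by
    have h3 : l / b ≤ c := by
      rw [hc, hl, ← mul_div_assoc, div_le_div_iff₀ hb0 hb1]
      nlinarith
    refine le_trans ?_ h3
    rw [div_le_div_iff₀ (by positivity) hb0]
    nlinarith
  have hdc : 2 * d ≤ c := by
    have h4 : d ≤ 1 / (4 * b) := min_le_right _ _
    have h5 : 2 * (1 / (4 * b)) = 1 / (2 * b) := by field_simp; norm_num
    linarith
  have hd1 : d ≤ 1 := min_le_left _ _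
  have hstep : ∀ x ∈ S, 0 ≤ x → l * x + c ∈ S := by
    intro x hx h
    have h1 : 0 ≤ (b ^ m - 1) / (b - 1) := div_nonneg (by linarith) hb1.le
    have h2 := pow_mul_mem ha hSa n _ (affine_iterate_mem hb hSb m x hx h) (by positivity)
    convert h2 using 1
    rw [hl, hc]
    ring
  obtain ⟨z, hzS, hz1, hz2⟩ := exists_mem_of_step h0 hstep hU
    ((mul_le_mul_of_nonneg_left (by linarith) (abs_nonneg _)).trans hl2) hdc (by linarith)
    (show u / a ^ j + c + d < v / a ^ j by linarith)
  rw [div_lt_iff₀ haj] at hz1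
  rw [lt_div_iff₀ haj] at hz2
  refine ⟨a ^ j * z, pow_mul_mem ha hSa j z hzS ?_, by linarith, by linarith⟩
  by_contra hneg
  nlinarith [not_le.mp hneg]

lemma continuous_Tmap (a b : ℝ) (i : Bool) : Continuous (Tmap a b i) := by
  cases i
  · exact ENNReal.continuous_const_mul ENNReal.ofReal_ne_top
  · exact (ENNReal.continuous_const_mul (ENNReal.ofReal_ne_top (r := b))).add continuous_const

/-- The support of a stationary measure is forward invariant under both maps. -/
lemma Tmap_mem_support {a b p : ℝ} (hp0 : 0 < p) (hp1 : p < 1) {μ : Measure ℝ≥0∞}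
    (hstat : ∀ B : Set ℝ≥0∞, MeasurableSet B →
      μ B = ENNReal.ofReal p * μ (Tmap a b false ⁻¹' B) +
        ENNReal.ofReal (1 - p) * μ (Tmap a b true ⁻¹' B))
    (i : Bool) {x : ℝ≥0∞} (hx : x ∈ μ.support) : Tmap a b i x ∈ μ.support := by
  rw [Measure.mem_support_iff_forall] at hx ⊢
  intro U hU
  obtain ⟨W, hWU, hW, hxW⟩ := mem_nhds_iff.mp hU
  refine lt_of_lt_of_le ?_ (measure_mono hWU)
  have hpre := hx _ ((hW.preimage (continuous_Tmap a b i)).mem_nhds hxW)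
  rw [hstat W hW.measurableSet]
  cases i
  · exact lt_of_lt_of_le (ENNReal.mul_pos (by simpa using hp0) hpre.ne') le_self_add
  · exact lt_of_lt_of_le (ENNReal.mul_pos (by simpa using hp1) hpre.ne') le_add_self

/-- A point of the support other than `∞` is contracted to `0` by the iterates of `T₀`. -/
lemma zero_mem_support {a b p : ℝ} (ha1 : a < 1) (hp0 : 0 < p) (hp1 : p < 1)
    {μ : Measure ℝ≥0∞} [IsProbabilityMeasure μ] (hμtop : μ {⊤} = 0)
    (hstat : ∀ B : Set ℝ≥0∞, MeasurableSet B →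
      μ B = ENNReal.ofReal p * μ (Tmap a b false ⁻¹' B) +
        ENNReal.ofReal (1 - p) * μ (Tmap a b true ⁻¹' B)) :
    (0 : ℝ≥0∞) ∈ μ.support := by
  have hpos : 0 < μ {(⊤ : ℝ≥0∞)}ᶜ := by
    rw [(prob_compl_eq_one_iff (measurableSet_singleton _)).mpr hμtop]
    exact one_pos
  obtain ⟨x, hxtop, hx⟩ := Measure.nonempty_inter_support_of_pos hpos
  have hiter : ∀ n : ℕ, ENNReal.ofReal a ^ n * x ∈ μ.support := by
    intro n
    induction n with
    | zero => simpa using hx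
    | succ n ih =>
      have h := Tmap_mem_support hp0 hp1 hstat false ih
      simpa [Tmap, pow_succ', mul_assoc] using h
  have hlim : Filter.Tendsto (fun n : ℕ => ENNReal.ofReal a ^ n * x) Filter.atTop (nhds 0) := by
    have h := ENNReal.Tendsto.mul_const (b := x)
      (ENNReal.tendsto_pow_atTop_nhds_zero_of_lt_one (ENNReal.ofReal_lt_one.mpr ha1))
      (Or.inr hxtop)
    simpa using h
  exact Measure.isClosed_support.mem_of_tendsto hlim (Filter.Eventually.of_forall hiter)

/-- **Lemma 6.5 (full support).** Let `0 < p < 1` and let `μ` be a probability measure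
on `ℝ̄₊` with `μ({∞}) = 0` satisfying the stationarity equation
`μ(B) = p·μ(T₀⁻¹(B)) + (1−p)·μ(T₁⁻¹(B))` for every Borel set `B`. Then every nonempty
open interval `I ⊆ ℝ₊` has `μ(I) > 0`; in other words the support of `μ` is all of
`ℝ̄₊`. -/
theorem full_support (a b p : ℝ) (ha : 0 < a) (ha1 : a < 1) (hb : 1 < b)
    (hp0 : 0 < p) (hp1 : p < 1)
    (μ : Measure ℝ≥0∞) [IsProbabilityMeasure μ] (hμtop : μ {⊤} = 0)
    (hstat : ∀ B : Set ℝ≥0∞, MeasurableSet B →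
      μ B = ENNReal.ofReal p * μ (Tmap a b false ⁻¹' B) +
        ENNReal.ofReal (1 - p) * μ (Tmap a b true ⁻¹' B)) :
    (∀ u v : ℝ≥0∞, u < v → 0 < μ (Set.Ioo u v)) ∧
    (∀ U : Set ℝ≥0∞, IsOpen U → U.Nonempty → 0 < μ U) := by
  have hdense : ∀ u v : ℝ≥0∞, u < v → ∃ z ∈ μ.support, u < z ∧ z < v := by
    intro u v huv
    obtain ⟨w, huw, hwv⟩ := exists_between huv
    have hw : w ≠ ⊤ := hwv.ne_top
    have hu : u ≠ ⊤ := huw.ne_top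
    -- Transport to `ℝ`, where `ENNReal.ofReal` is faithful on nonnegative numbers only.
    obtain ⟨z, hzS, hz1, hz2⟩ := exists_mem_between ha ha1 hb
      (S := {x : ℝ | ENNReal.ofReal x ∈ μ.support})
      (by simpa using zero_mem_support ha1 hp0 hp1 hμtop hstat)
      (fun x hx _ => by
        have h := Tmap_mem_support hp0 hp1 hstat false hx
        simpa [Tmap, ENNReal.ofReal_mul ha.le] using h)
      (fun x hx h0 => by
        have h := Tmap_mem_support hp0 hp1 hstat true hx
        have hb0 : 0 ≤ b := by linarith
        simpa [Tmap, ENNReal.ofReal_mul hb0,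
          ENNReal.ofReal_add (mul_nonneg hb0 h0) zero_le_one] using h)
      (u := u.toReal) (v := w.toReal) ENNReal.toReal_nonneg
      ((ENNReal.toReal_lt_toReal hu hw).mpr huw)
    refine ⟨ENNReal.ofReal z, hzS, (ENNReal.lt_ofReal_iff_toReal_lt hu).mpr hz1, ?_⟩
    exact ((ENNReal.ofReal_lt_iff_lt_toReal (ENNReal.toReal_nonneg.trans hz1.le) hw).mpr hz2).trans
      hwv
  have huniv : μ.support = Set.univ := by
    rw [← Measure.isClosed_support.closure_eq]
    exact (dense_of_exists_between fun _ _ h => hdense _ _ h).closure_eq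
  have hopen : ∀ U : Set ℝ≥0∞, IsOpen U → U.Nonempty → 0 < μ U := by
    rintro U hU ⟨x, hx⟩
    have hxs : x ∈ μ.support := huniv ▸ Set.mem_univ x
    exact (Measure.mem_support_iff_forall x).mp hxs U (hU.mem_nhds hx)
  exact ⟨fun u v huv => hopen _ isOpen_Ioo (Set.nonempty_Ioo.mpr huv), hopen⟩
end
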